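/- arXiv:1109.5250 — 2 statements merged into one kernel-verified Lean document; each statement's English description precedes it below -/
import Mathlib

section
/- Let s > 1, q ∈ [1,∞), let ω be an s-admissible weight on ℝ^d, let f ∈ L¹(ℝ^d) have compact support, let Γ₀ ⊂⊂ Γ be open cones in ℝ^d ∖ {0}, and let Λ = A(ℤ^d) for an invertible d×d real matrix A. If ∫_Γ (|f̂(ξ)|·ω(ξ))^q dξ < ∞, then Σ_{λ ∈ Λ ∩ Γ₀} (|f̂(λ)|·ω(λ))^q < ∞. -/
open MeasureTheory Complex Set
open scoped ENNReal RealInnerProductSpace NNReal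

noncomputable section

namespace Paper

variable {d : ℕ}

/-- The Fourier transform, normalized by `(2π)^{-d/2}`. -/
def FT (f : EuclideanSpace ℝ (Fin d) → ℂ) (ξ : EuclideanSpace ℝ (Fin d)) : ℂ :=
  ((2 * Real.pi) ^ (-(d : ℝ) / 2) : ℝ) *
    ∫ x, f x * Complex.exp (-(⟪x, ξ⟫ : ℝ) * Complex.I)

/-- The short-time Fourier transform `V_φ f (x, ξ)`. -/
def STFT (φ f : EuclideanSpace ℝ (Fin d) → ℂ) (x ξ : EuclideanSpace ℝ (Fin d)) : ℂ :=
  ((2 * Real.pi) ^ (-(d : ℝ) / 2) : ℝ) *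
    ∫ y, f y * (starRingEnd ℂ) (φ (y - x)) * Complex.exp (-(⟪ξ, y⟫ : ℝ) * Complex.I)

/-- A cone in `ℝ^d ∖ {0}`. -/
def IsCone (Γ : Set (EuclideanSpace ℝ (Fin d))) : Prop :=
  (0 : EuclideanSpace ℝ (Fin d)) ∉ Γ ∧ ∀ ξ ∈ Γ, ∀ t : ℝ, 0 < t → t • ξ ∈ Γ

/-- An `s`-cutoff: smooth, compactly supported, with Fourier transform decaying faster
than every `exp (-N |ξ|^{1/s})`. -/
def IsSCutoff (s : ℝ) (φ : EuclideanSpace ℝ (Fin d) → ℂ) : Prop :=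
  ContDiff ℝ (⊤ : ℕ∞) φ ∧ HasCompactSupport φ ∧
    ∀ N : ℝ, 0 < N → ∃ C : ℝ, 0 < C ∧
      ∀ ξ, ‖FT φ ξ‖ ≤ C * Real.exp (-N * ‖ξ‖ ^ (1 / s))

/-- An `s`-admissible weight: positive, measurable, and moderate with respect to an even
submultiplicative weight of sub-exponential growth of order `1/s`. -/
def IsSAdmissible (s : ℝ) (ω : EuclideanSpace ℝ (Fin d) → ℝ) : Prop :=
  Measurable ω ∧ (∀ x, 0 < ω x) ∧
    ∃ v : EuclideanSpace ℝ (Fin d) → ℝ, Measurable v ∧ (∀ x, 0 < v x) ∧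
      (∀ x, v (-x) = v x) ∧ (∀ x y, v (x + y) ≤ v x * v y) ∧
      ∃ C₀ k₀ C₁ : ℝ, 0 < C₀ ∧ 0 < k₀ ∧ 0 < C₁ ∧
        (∀ ξ, v ξ ≤ C₀ * Real.exp (k₀ * ‖ξ‖ ^ (1 / s))) ∧
        ∀ x y, ω (x + y) ≤ C₁ * v x * ω y

/-- The Fourier–Lebesgue seminorm `( ∫_Γ (|f̂| ω)^q )^{1/q}` (ess-sup when `q = ∞`). -/
def FLSemi (ω : EuclideanSpace ℝ (Fin d) → ℝ) (q : ℝ≥0∞)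
    (f : EuclideanSpace ℝ (Fin d) → ℂ) (Γ : Set (EuclideanSpace ℝ (Fin d))) : ℝ≥0∞ :=
  eLpNorm (fun ξ => ‖FT f ξ‖ * ω ξ) q (volume.restrict Γ)

/-- The Fourier–Lebesgue wave-front set `WF_{FL^q_ω} f`. -/
def WF_FL (s : ℝ) (q : ℝ≥0∞) (ω : EuclideanSpace ℝ (Fin d) → ℝ)
    (f : EuclideanSpace ℝ (Fin d) → ℂ) :
    Set (EuclideanSpace ℝ (Fin d) × EuclideanSpace ℝ (Fin d)) :=
  {z | z.2 ≠ 0 ∧ ∀ φ : EuclideanSpace ℝ (Fin d) → ℂ, IsSCutoff s φ → φ z.1 ≠ 0 →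
    ∀ Γ : Set (EuclideanSpace ℝ (Fin d)), IsOpen Γ → IsCone Γ → z.2 ∈ Γ →
      FLSemi ω q (fun x => φ x * f x) Γ = ∞}

/-- The `s`-wave-front set `WF_s f`. -/
def WFs (s : ℝ) (f : EuclideanSpace ℝ (Fin d) → ℂ) :
    Set (EuclideanSpace ℝ (Fin d) × EuclideanSpace ℝ (Fin d)) :=
  {z | z.2 ≠ 0 ∧ ¬ ∃ φ : EuclideanSpace ℝ (Fin d) → ℂ, IsSCutoff s φ ∧
    (∃ U : Set (EuclideanSpace ℝ (Fin d)), IsOpen U ∧ z.1 ∈ U ∧ ∀ x ∈ U, φ x = 1) ∧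
    ∃ Γ : Set (EuclideanSpace ℝ (Fin d)), IsOpen Γ ∧ IsCone Γ ∧ z.2 ∈ Γ ∧
      ∃ C k : ℝ, 0 < C ∧ 0 < k ∧
        ∀ ξ ∈ Γ, ‖FT (fun x => φ x * f x) ξ‖ ≤ C * Real.exp (-k * ‖ξ‖ ^ (1 / s))}

/-- The mixed modulation-space seminorm
`( ∫_Γ ( ∫ |V_g F(x,ξ)|^p dx )^{q/p} ω(ξ)^q dξ )^{1/q}` with the usual
ess-sup interpretations for `p = ∞` or `q = ∞`. -/
def ModSemi (g F : EuclideanSpace ℝ (Fin d) → ℂ) (ω : EuclideanSpace ℝ (Fin d) → ℝ)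
    (p q : ℝ≥0∞) (Γ : Set (EuclideanSpace ℝ (Fin d))) : ℝ≥0∞ :=
  if q = ∞ then
    essSup (fun ξ => eLpNorm (fun x => STFT g F x ξ) p volume * ENNReal.ofReal (ω ξ))
      (volume.restrict Γ)
  else
    (∫⁻ ξ in Γ, (eLpNorm (fun x => STFT g F x ξ) p volume * ENNReal.ofReal (ω ξ)) ^ q.toReal) ^
      (1 / q.toReal)

/-- The modulation wave-front set `WF_{M^{p,q}_ω} f`, with window `g`. -/
def WF_M (s : ℝ) (p q : ℝ≥0∞) (ω : EuclideanSpace ℝ (Fin d) → ℝ)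
    (g f : EuclideanSpace ℝ (Fin d) → ℂ) :
    Set (EuclideanSpace ℝ (Fin d) × EuclideanSpace ℝ (Fin d)) :=
  {z | z.2 ≠ 0 ∧ ∀ φ : EuclideanSpace ℝ (Fin d) → ℂ, IsSCutoff s φ → φ z.1 ≠ 0 →
    ∀ Γ : Set (EuclideanSpace ℝ (Fin d)), IsOpen Γ → IsCone Γ → z.2 ∈ Γ →
      ModSemi g (fun x => φ x * f x) ω p q Γ = ∞}

/-- Reinterpret a plain vector as a point of Euclidean space. -/
def toE (x : Fin d → ℝ) : EuclideanSpace ℝ (Fin d) :=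
  (EuclideanSpace.equiv (Fin d) ℝ).symm x

/-- The point `A k` of the lattice `A(ℤ^d)`. -/
def latPt (A : Matrix (Fin d) (Fin d) ℝ) (k : Fin d → ℤ) : EuclideanSpace ℝ (Fin d) :=
  toE (A.mulVec fun i => (k i : ℝ))

/-- The point `c (Aᵀ)⁻¹ k` of the dual lattice `c (Aᵀ)⁻¹(ℤ^d)`. -/
def dualLatPt (A : Matrix (Fin d) (Fin d) ℝ) (c : ℝ) (k : Fin d → ℤ) :
    EuclideanSpace ℝ (Fin d) :=
  toE (c • (A.transpose⁻¹.mulVec fun i => (k i : ℝ)))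

/-- The parallelepiped `x₁ + A([0,1]^d)`. -/
def lattPara (A : Matrix (Fin d) (Fin d) ℝ) (x₁ : EuclideanSpace ℝ (Fin d)) :
    Set (EuclideanSpace ℝ (Fin d)) :=
  (fun t : Fin d → ℝ => x₁ + toE (A.mulVec t)) '' (Set.univ.pi fun _ => Set.Icc 0 1)

/-- The adjoint short-time Fourier transform `V*_φ F`. -/
def VStar (φ : EuclideanSpace ℝ (Fin d) → ℂ)
    (F : EuclideanSpace ℝ (Fin d) × EuclideanSpace ℝ (Fin d) → ℂ)
    (t : EuclideanSpace ℝ (Fin d)) : ℂ :=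
  ((2 * Real.pi) ^ (-(d : ℝ) / 2) : ℝ) *
    ∫ z : EuclideanSpace ℝ (Fin d) × EuclideanSpace ℝ (Fin d),
      F z * Complex.exp ((⟪z.2, t⟫ : ℝ) * Complex.I) * φ (t - z.1)

/-!
Multiplying `f` by a cutoff equal to `1` on its support turns `FT f` into a convolution,
`FT f l = ∫ FT f (l + η) * Ψ η`. Since `1 < s`, non-quasianalyticity allows a cutoff for which `Ψ`
decays faster than every `exp (-N * ‖η‖ ^ (1 / s))`: take the transform of a smooth bump and
multiply it by `∏ k, m ((k + 1) ^ (-σ) • η)` with `1 < σ < s`, where `m` is the transform of a bump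
density, so that the scales are summable and the cutoff property survives the limit.

For `l ∈ Γ₀`, either `l + η ∈ Γ`, and moderateness moves the weight from `l` to `l + η`, or
`‖η‖ ≥ δ * ‖l‖`, and the decay of `Ψ` absorbs the weight altogether. Hence `‖FT f‖ * ω` is dominated
on `Γ₀` by the convolution of an `L^q` function with `exp (-‖·‖ ^ (1 / s))`. Young's inequality in
its discrete form, sampled at the points of a uniformly separated family, concludes.
-/

section Subexponential

section Norm

variable {E : Type*} [SeminormedAddCommGroup E]

theorem norm_add_rpow_le {α : ℝ} (hα₀ : 0 ≤ α) (hα₁ : α ≤ 1) (x y : E) :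
    ‖x + y‖ ^ α ≤ ‖x‖ ^ α + ‖y‖ ^ α :=
  (Real.rpow_le_rpow (norm_nonneg _) (norm_add_le x y) hα₀).trans
    (Real.rpow_add_le_add_rpow (norm_nonneg x) (norm_nonneg y) hα₀ hα₁)

/-- The kernel `exp (-‖x‖ ^ α)`, against which the convolution estimates are performed. -/
def subexpKernel (α : ℝ) (x : E) : ℝ := Real.exp (-‖x‖ ^ α)

theorem subexpKernel_pos (α : ℝ) (x : E) : 0 < subexpKernel α x := Real.exp_pos _

theorem subexpKernel_le_one (α : ℝ) (x : E) : subexpKernel α x ≤ 1 :=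
  Real.exp_le_one_iff.2 (neg_nonpos.2 (by positivity))

theorem subexpKernel_mul_le {α : ℝ} (hα₀ : 0 ≤ α) (hα₁ : α ≤ 1) (x y : E) :
    subexpKernel α x * subexpKernel α y ≤ subexpKernel α (x + y) := by
  rw [subexpKernel, subexpKernel, ← Real.exp_add]
  exact Real.exp_le_exp.2 (by linarith [norm_add_rpow_le hα₀ hα₁ x y])

theorem continuous_subexpKernel {α : ℝ} (hα : 0 ≤ α) :
    Continuous (subexpKernel α : E → ℝ) :=
  Real.continuous_exp.comp (continuous_norm.rpow_const fun _ => .inr hα).neg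

/-- Decay faster than every `exp (-N * ‖η‖ ^ α)`, as for the Fourier transform of a compactly
supported function in a Gevrey class of order `< 1 / α`. -/
def HasSubexpDecay (α : ℝ) (Ψ : E → ℂ) : Prop :=
  ∀ N : ℝ, ∃ C : ℝ, 0 ≤ C ∧ ∀ η, ‖Ψ η‖ ≤ C * Real.exp (-N * ‖η‖ ^ α)

end Norm

theorem integrable_subexpKernel {E : Type*} [NormedAddCommGroup E] [NormedSpace ℝ E]
    [FiniteDimensional ℝ E] [MeasurableSpace E] [BorelSpace E] (μ : Measure E)
    [μ.IsAddHaarMeasure] {α : ℝ} (hα : 0 < α) : Integrable (subexpKernel α : E → ℝ) μ := by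
  rcases subsingleton_or_nontrivial E with hE | hE
  · exact Integrable.of_finite
  · refine (integrable_fun_norm_addHaar μ (f := fun t => Real.exp (-t ^ α))).2 ?_
    have hdim : (-1 : ℝ) < (Module.finrank ℝ E - 1 : ℕ) := by
      linarith [(Module.finrank ℝ E - 1).cast_nonneg (α := ℝ)]
    simpa only [smul_eq_mul, Real.rpow_natCast] using
      integrableOn_rpow_mul_exp_neg_rpow hdim hα

theorem exists_mul_rpow_le_mul_rpow_add {α β c : ℝ} (hα : 0 < α) (hαβ : α < β) (hc : 0 < c)
    (k : ℝ) : ∃ C, ∀ t : ℝ, 0 ≤ t → k * t ^ α ≤ c * t ^ β + C := by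
  set T := (|k| / c) ^ (1 / (β - α))
  have hT : T ^ (β - α) = |k| / c := by
    rw [← Real.rpow_mul (by positivity), one_div_mul_cancel (sub_pos.2 hαβ).ne', Real.rpow_one]
  refine ⟨|k| * T ^ α, fun t ht => ?_⟩
  have hk : k * t ^ α ≤ |k| * t ^ α := by gcongr; exact le_abs_self k
  refine hk.trans ?_
  rcases le_total t T with htT | hTt
  · have : |k| * t ^ α ≤ |k| * T ^ α := by gcongr
    have : 0 ≤ c * t ^ β := by positivity
    linarith
  · have hkc : |k| ≤ c * t ^ (β - α) := by
      rw [← div_le_iff₀' hc, ← hT]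
      exact Real.rpow_le_rpow (by positivity) hTt (sub_pos.2 hαβ).le
    have : |k| * t ^ α ≤ c * t ^ β := calc
      |k| * t ^ α ≤ c * t ^ (β - α) * t ^ α := by gcongr
      _ = c * t ^ β := by
        rw [mul_assoc, ← Real.rpow_add_of_nonneg ht (sub_pos.2 hαβ).le hα.le, sub_add_cancel]
    have : 0 ≤ |k| * T ^ α := by positivity
    linarith

end Subexponential

section InfiniteProduct

open Filter Topology
open scoped SchwartzMap

variable {E : Type*} [NormedAddCommGroup E] [NormedSpace ℝ E]

theorem exists_lipschitzWith_schwartzMap {F : Type*} [NormedAddCommGroup F] [NormedSpace ℝ F]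
    (m : 𝓢(E, F)) : ∃ L, LipschitzWith L m := by
  obtain ⟨L, hL⟩ := m.decay' 0 1
  refine ⟨L.toNNReal, lipschitzWith_of_nnnorm_fderiv_le m.differentiable fun x => ?_⟩
  rw [← NNReal.coe_le_coe, coe_nnnorm, ← norm_iteratedFDeriv_one]
  simpa using! (hL x).trans (Real.le_coe_toNNReal L)

theorem multipliable_comp_smul {m : E → ℂ} {L : ℝ≥0} (hm : LipschitzWith L m) (hm_zero : m 0 = 1)
    {a : ℕ → ℝ} (ha : ∀ k, 0 ≤ a k) (ha_sum : Summable a) (η : E) :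
    Multipliable fun k => m (a k • η) := by
  have hsum : Summable fun k => ‖m (a k • η) - 1‖ := by
    refine .of_nonneg_of_le (fun _ => norm_nonneg _) (fun k => ?_) (ha_sum.mul_right (L * ‖η‖))
    have h := hm.norm_sub_le (a k • η) 0
    rw [hm_zero, sub_zero, norm_smul, Real.norm_of_nonneg (ha k)] at h
    linarith
  simpa only [add_sub_cancel] using multipliable_one_add_of_summable hsum

theorem norm_tprod_le_exp_neg {z : ℕ → ℂ} (hz : Multipliable z) (hz_le : ∀ k, ‖z k‖ ≤ 1) {n : ℕ}
    (hn : ∀ k < n, ‖z k‖ ≤ Real.exp (-1)) : ‖∏' k, z k‖ ≤ Real.exp (-n) := by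
  refine le_of_tendsto hz.hasProd.tendsto_prod_nat.norm ?_
  filter_upwards [eventually_ge_atTop n] with N hN
  rw [norm_prod]
  calc ∏ k ∈ Finset.range N, ‖z k‖
      ≤ ∏ k ∈ Finset.range n, ‖z k‖ :=
        Finset.prod_le_prod_of_subset_of_le_one (Finset.range_mono hN)
          (fun _ _ => norm_nonneg _) fun k _ _ => hz_le k
    _ ≤ ∏ _k ∈ Finset.range n, Real.exp (-1) :=
        Finset.prod_le_prod (fun _ _ => norm_nonneg _) fun k hk => hn k (Finset.mem_range.1 hk)
    _ = Real.exp (-n) := by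
        rw [Finset.prod_const, Finset.card_range, ← Real.exp_nat_mul, mul_neg_one]

-- The `k`-th factor is at most `e⁻¹` as long as `(k + 1) ^ σ ≤ ‖η‖ / (e * C)`.
theorem norm_tprod_comp_smul_le {m : E → ℂ} (hm_le : ∀ ξ, ‖m ξ‖ ≤ 1) {C : ℝ} (hC : 0 < C)
    (hm_decay : ∀ ξ, ‖ξ‖ * ‖m ξ‖ ≤ C) {σ : ℝ} (hσ : 0 < σ) {η : E}
    (hmul : Multipliable fun k : ℕ => m (((k : ℝ) + 1) ^ (-σ) • η)) :
    ‖∏' k : ℕ, m (((k : ℝ) + 1) ^ (-σ) • η)‖ ≤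
      Real.exp (1 - (‖η‖ / (Real.exp 1 * C)) ^ (1 / σ)) := by
  set T := (‖η‖ / (Real.exp 1 * C)) ^ (1 / σ) with hT
  have hT_nonneg : 0 ≤ T := by positivity
  have hT_pow : T ^ σ = ‖η‖ / (Real.exp 1 * C) := by
    rw [hT, ← Real.rpow_mul (by positivity), one_div_mul_cancel hσ.ne', Real.rpow_one]
  refine (norm_tprod_le_exp_neg hmul (fun k => hm_le _) (n := ⌊T⌋₊) fun k hk => ?_).trans
    (Real.exp_le_exp.2 (by linarith [Nat.lt_floor_add_one T]))
  have hkT : (k : ℝ) + 1 ≤ T := by exact_mod_cast (Nat.le_floor_iff hT_nonneg).1 hk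
  have hk_pow : ((k : ℝ) + 1) ^ σ ≤ ‖η‖ / (Real.exp 1 * C) :=
    hT_pow ▸ Real.rpow_le_rpow (by positivity) hkT hσ.le
  have hk_norm : Real.exp 1 * C ≤ ‖((k : ℝ) + 1) ^ (-σ) • η‖ := by
    rw [norm_smul, Real.norm_of_nonneg (by positivity), Real.rpow_neg (by positivity),
      inv_mul_eq_div, le_div_iff₀ (by positivity), mul_comm]
    exact (le_div_iff₀ (by positivity)).1 hk_pow
  have hmk := (mul_le_mul_of_nonneg_right hk_norm (norm_nonneg _)).trans (hm_decay _)
  rw [Real.exp_neg, ← one_div, le_div_iff₀' (Real.exp_pos 1)]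
  nlinarith

end InfiniteProduct

section FourierCutoff

open Filter Topology Function
open scoped FourierTransform SchwartzMap

variable {V : Type*} [NormedAddCommGroup V] [InnerProductSpace ℝ V] [FiniteDimensional ℝ V]
  [MeasurableSpace V] [BorelSpace V]

theorem continuous_fourier {f : V → ℂ} (hf : Integrable f) : Continuous (𝓕 f) :=
  VectorFourier.fourierIntegral_continuous Real.continuous_fourierChar continuous_inner hf

theorem norm_fourier_le_integral_norm (f : V → ℂ) (ξ : V) : ‖𝓕 f ξ‖ ≤ ∫ x, ‖f x‖ :=
  VectorFourier.norm_fourierIntegral_le_integral_norm _ _ _ _ _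

theorem fourier_mul_fourier_smul {f g : V → ℂ} (hf : Integrable f) (hg : Integrable g) (a : ℝ)
    (x : V) : 𝓕 (fun η => f η * 𝓕 g (a • η)) x = ∫ y, 𝓕 f (x + a • y) * g y := by
  set fx : V → ℂ := fun η => Real.fourierChar (-⟪η, x⟫) • f η
  have hfx : Integrable fx := (Real.fourierIntegral_convergent_iff x).2 hf
  have hcont : Continuous fun p : V × V => (a • innerₗ V) p.1 p.2 :=
    continuous_inner.const_smul a
  have hflip := VectorFourier.integral_fourierIntegral_smul_eq_flip (μ := volume) (ν := volume)
    Real.continuous_fourierChar hcont hfx hg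
  have hleft (y : V) : VectorFourier.fourierIntegral Real.fourierChar volume (a • innerₗ V) fx y
      = 𝓕 f (x + a • y) := by
    refine integral_congr_ae (ae_of_all _ fun η => ?_)
    simp only [fx, smul_smul, ← AddChar.map_add_eq_mul]
    congr 2
    simp [inner_add_right, real_inner_smul_right]
  have hright (η : V) : VectorFourier.fourierIntegral Real.fourierChar volume
      (a • innerₗ V).flip g η = 𝓕 g (a • η) := by
    refine integral_congr_ae (ae_of_all _ fun y => ?_)
    simp [real_inner_comm]
  simp only [hleft, hright, smul_eq_mul] at hflip
  rw [hflip, Real.fourier_eq]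
  exact integral_congr_ae (ae_of_all _ fun η => (smul_mul_assoc _ _ _).symm)

/-- `Ψ` is integrable with Fourier transform equal to `1` on the ball of radius `R`, so that
multiplication by `𝓕 Ψ` reproduces the functions supported in that ball. -/
def IsFourierCutoff (R : ℝ) (Ψ : V → ℂ) : Prop :=
  Integrable Ψ ∧ ∀ x, ‖x‖ ≤ R → 𝓕 Ψ x = 1

theorem IsFourierCutoff.mul_fourier_smul {R a : ℝ} {Ψ ρ : V → ℂ} (hΨ : IsFourierCutoff R Ψ)
    (hρ : Integrable ρ) (hρ_supp : support ρ ⊆ Metric.closedBall 0 1) (hρ_one : ∫ y, ρ y = 1)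
    (ha : 0 ≤ a) : IsFourierCutoff (R - a) fun η => Ψ η * 𝓕 ρ (a • η) := by
  refine ⟨hΨ.1.mul_bdd ((continuous_fourier hρ).comp (continuous_const_smul a)).aestronglyMeasurable
    (ae_of_all _ fun η => norm_fourier_le_integral_norm ρ _), fun x hx => ?_⟩
  have hone (y : V) : 𝓕 Ψ (x + a • y) * ρ y = ρ y := by
    by_cases hy : ρ y = 0
    · rw [hy, mul_zero]
    · have hy_norm : ‖y‖ ≤ 1 := mem_closedBall_zero_iff.1 (hρ_supp hy)
      have hxy : ‖x + a • y‖ ≤ R := by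
        have : ‖a • y‖ ≤ a := by
          rw [norm_smul, Real.norm_of_nonneg ha]
          exact mul_le_of_le_one_right ha hy_norm
        linarith [norm_add_le x (a • y)]
      rw [hΨ.2 _ hxy, one_mul]
  rw [fourier_mul_fourier_smul hΨ.1 hρ]
  simp only [hone, hρ_one]

theorem IsFourierCutoff.mul_prod_fourier_smul {R : ℝ} {Ψ ρ : V → ℂ} (hΨ : IsFourierCutoff R Ψ)
    (hρ : Integrable ρ) (hρ_supp : support ρ ⊆ Metric.closedBall 0 1) (hρ_one : ∫ y, ρ y = 1)
    {a : ℕ → ℝ} (ha : ∀ k, 0 ≤ a k) (n : ℕ) :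
    IsFourierCutoff (R - ∑ k ∈ Finset.range n, a k)
      fun η => Ψ η * ∏ k ∈ Finset.range n, 𝓕 ρ (a k • η) := by
  induction n with
  | zero => simpa using hΨ
  | succ n ih =>
    simpa only [Finset.sum_range_succ, Finset.prod_range_succ, sub_sub, mul_assoc] using
      ih.mul_fourier_smul hρ hρ_supp hρ_one (ha n)

theorem IsFourierCutoff.of_tendsto {R : ℝ} {Φ : V → ℂ} (hΦ : Integrable Φ) {Ψ : ℕ → V → ℂ}
    {Ψ_lim : V → ℂ} (hΨ : ∀ n, IsFourierCutoff R (Ψ n)) (hbound : ∀ n η, ‖Ψ n η‖ ≤ ‖Φ η‖)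
    (hlim : ∀ η, Tendsto (fun n => Ψ n η) atTop (𝓝 (Ψ_lim η))) : IsFourierCutoff R Ψ_lim := by
  refine ⟨hΦ.mono (aestronglyMeasurable_of_tendsto_ae atTop (fun n => (hΨ n).1.1)
    (ae_of_all _ hlim)) (ae_of_all _ fun η => le_of_tendsto' (hlim η).norm (hbound · η)),
    fun x hx => ?_⟩
  have hfourier : Tendsto (fun n => 𝓕 (Ψ n) x) atTop (𝓝 (𝓕 Ψ_lim x)) := by
    refine tendsto_integral_of_dominated_convergence (fun η => ‖Φ η‖)
      (fun n => ((Real.fourierIntegral_convergent_iff x).2 (hΨ n).1).1) hΦ.norm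
      (fun n => ae_of_all _ fun η => ?_) (ae_of_all _ fun η => (hlim η).const_smul _)
    exact (Circle.norm_smul _ _).trans_le (hbound n η)
  simp only [(hΨ _).2 x hx] at hfourier
  exact tendsto_nhds_unique hfourier tendsto_const_nhds

theorem IsFourierCutoff.mono {R R' : ℝ} {Ψ : V → ℂ} (hΨ : IsFourierCutoff R Ψ) (h : R' ≤ R) :
    IsFourierCutoff R' Ψ :=
  ⟨hΨ.1, fun x hx => hΨ.2 x (hx.trans h)⟩

theorem IsFourierCutoff.mul_tprod_fourier_smul {R : ℝ} {Ψ ρ : V → ℂ} (hΨ : IsFourierCutoff R Ψ)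
    (hρ : Integrable ρ) (hρ_supp : support ρ ⊆ Metric.closedBall 0 1) (hρ_one : ∫ y, ρ y = 1)
    (hρ_le : ∀ ξ, ‖𝓕 ρ ξ‖ ≤ 1) {a : ℕ → ℝ} (ha : ∀ k, 0 ≤ a k) (ha_sum : Summable a)
    (hmul : ∀ η, Multipliable fun k => 𝓕 ρ (a k • η)) :
    IsFourierCutoff (R - ∑' k, a k) fun η => Ψ η * ∏' k, 𝓕 ρ (a k • η) := by
  refine .of_tendsto hΨ.1 (fun n => (hΨ.mul_prod_fourier_smul hρ hρ_supp hρ_one ha n).mono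
    (sub_le_sub_left (ha_sum.sum_le_tsum _ fun k _ => ha k) R)) (fun n η => ?_)
    fun η => ((hmul η).hasProd.tendsto_prod_nat).const_mul _
  rw [norm_mul, norm_prod]
  exact mul_le_of_le_one_right (norm_nonneg _)
    (Finset.prod_le_one (fun _ _ => norm_nonneg _) fun _ _ => hρ_le _)

theorem exists_schwartzMap_integral_eq_one : ∃ ρ : 𝓢(V, ℂ),
    support ρ ⊆ Metric.closedBall 0 1 ∧ ∫ y, ρ y = 1 ∧ ∫ y, ‖ρ y‖ = 1 := by
  let b : ContDiffBump (0 : V) := ⟨1 / 2, 1, by norm_num, by norm_num⟩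
  let ρ : 𝓢(V, ℂ) := HasCompactSupport.toSchwartzMap (f := fun y => (b.normed volume y : ℂ))
    (b.hasCompactSupport_normed.comp_left ofReal_zero)
    (ofRealCLM.contDiff.comp b.contDiff_normed)
  have hρ (y : V) : ρ y = (b.normed volume y : ℂ) := rfl
  refine ⟨ρ, fun y hy => Metric.ball_subset_closedBall ?_, ?_, ?_⟩
  · rw [← b.support_normed_eq (μ := volume)]
    exact fun h => hy (by rw [hρ, h, ofReal_zero])
  · simp only [hρ, integral_complex_ofReal, b.integral_normed, ofReal_one]
  · simp only [hρ, norm_real, Real.norm_of_nonneg (b.nonneg_normed _), b.integral_normed]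

theorem exists_schwartzMap_isFourierCutoff (R : ℝ) : ∃ Φ : 𝓢(V, ℂ), IsFourierCutoff R Φ := by
  let b : ContDiffBump (0 : V) := ⟨max R 1, max R 1 + 1, by positivity, by linarith⟩
  let φ : 𝓢(V, ℂ) := HasCompactSupport.toSchwartzMap (f := fun x => (b x : ℂ))
    (b.hasCompactSupport.comp_left ofReal_zero) (ofRealCLM.contDiff.comp b.contDiff)
  refine ⟨𝓕⁻ φ, (𝓕⁻ φ).integrable, fun x hx => ?_⟩
  have hbx : b x = 1 :=
    b.one_of_mem_closedBall (mem_closedBall_zero_iff.2 (hx.trans (le_max_left _ _)))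
  rw [← SchwartzMap.fourier_coe, FourierTransform.fourier_fourierInv_eq]
  exact congrArg ofReal hbx

theorem exists_isFourierCutoff_hasSubexpDecay {α : ℝ} (hα₀ : 0 < α) (hα₁ : α < 1) (R : ℝ) :
    ∃ Ψ : V → ℂ, IsFourierCutoff R Ψ ∧ HasSubexpDecay α Ψ := by
  -- `1 < σ` makes the scales `(k + 1) ^ (-σ)` summable; `σ < 1 / α` makes the product decay like
  -- `exp (-c * ‖η‖ ^ (1 / σ))`, which beats every `exp (-N * ‖η‖ ^ α)`.
  obtain ⟨σ, hσ₁, hσα⟩ := exists_between (one_lt_one_div hα₀ hα₁)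
  have hσ₀ : 0 < σ := one_pos.trans hσ₁
  set a : ℕ → ℝ := fun k => ((k : ℝ) + 1) ^ (-σ)
  have ha (k : ℕ) : 0 ≤ a k := by positivity
  have ha_sum : Summable a := by
    simpa [a] using (summable_nat_add_iff 1).2 (Real.summable_nat_rpow.2 (neg_lt_neg hσ₁))
  obtain ⟨ρ, hρ_supp, hρ_one, hρ_norm⟩ := exists_schwartzMap_integral_eq_one (V := V)
  obtain ⟨Φ, hΦ⟩ := exists_schwartzMap_isFourierCutoff (V := V) (R + ∑' k, a k)
  have hm_le (ξ : V) : ‖𝓕 (ρ : V → ℂ) ξ‖ ≤ 1 := hρ_norm ▸ norm_fourier_le_integral_norm ρ ξ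
  have hm_zero : 𝓕 (ρ : V → ℂ) 0 = 1 := by simp [Real.fourier_eq, hρ_one]
  obtain ⟨L, hL⟩ := exists_lipschitzWith_schwartzMap (𝓕 ρ)
  obtain ⟨C, hC, hm_decay⟩ := (𝓕 ρ).decay 1 0
  obtain ⟨B, hB, hΦ_le⟩ := Φ.decay 0 0
  simp only [pow_one, pow_zero, one_mul, norm_iteratedFDeriv_zero, SchwartzMap.fourier_coe]
    at hL hm_decay hΦ_le
  have hmul (η : V) := multipliable_comp_smul hL hm_zero ha ha_sum η
  refine ⟨fun η => Φ η * ∏' k, 𝓕 (ρ : V → ℂ) (a k • η), ?_, fun N => ?_⟩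
  · simpa only [add_sub_cancel_right] using
      hΦ.mul_tprod_fourier_smul ρ.integrable hρ_supp hρ_one hm_le ha ha_sum hmul
  · obtain ⟨C', hC'⟩ := exists_mul_rpow_le_mul_rpow_add hα₀ ((lt_one_div hσ₀ hα₀).1 hσα)
      (c := (1 / (Real.exp 1 * C)) ^ (1 / σ)) (by positivity) N
    refine ⟨B * Real.exp (1 + C'), by positivity, fun η => ?_⟩
    rw [norm_mul, mul_assoc, ← Real.exp_add]
    refine mul_le_mul (hΦ_le η) ((norm_tprod_comp_smul_le hm_le hC hm_decay hσ₀ (hmul η)).trans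
      (Real.exp_le_exp.2 ?_)) (norm_nonneg _) hB.le
    rw [div_eq_mul_one_div, mul_comm, Real.mul_rpow (by positivity) (norm_nonneg η)]
    linarith [hC' ‖η‖ (norm_nonneg η)]

end FourierCutoff

section DiscreteYoung

theorem rpow_lintegral_mul_le {X : Type*} [MeasurableSpace X] {μ : Measure X} {q : ℝ} (hq : 1 ≤ q)
    {g κ : X → ℝ≥0∞} (hg : Measurable g) (hκ : Measurable κ) :
    (∫⁻ x, g x * κ x ∂μ) ^ q ≤ (∫⁻ x, κ x ∂μ) ^ (q - 1) * ∫⁻ x, g x ^ q * κ x ∂μ := by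
  have hq₀ : 0 < q := one_pos.trans_le hq
  -- Jensen, as the comparison of `L^1` and `L^q` norms for the measure with density `κ`.
  have hnorm := eLpNorm'_le_eLpNorm'_mul_rpow_measure_univ (p := 1) (q := q) zero_lt_one hq
    (μ := μ.withDensity κ) hg.aestronglyMeasurable
  simp only [eLpNorm', enorm_eq_self, ENNReal.rpow_one, div_one,
    lintegral_withDensity_eq_lintegral_mul _ hκ hg,
    lintegral_withDensity_eq_lintegral_mul _ hκ (hg.pow_const q),
    withDensity_apply _ MeasurableSet.univ, setLIntegral_univ, Pi.mul_apply,
    mul_comm (κ _)] at hnorm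
  have hexp : (1 - 1 / q) * q = q - 1 := by field_simp
  calc (∫⁻ x, g x * κ x ∂μ) ^ q
      ≤ ((∫⁻ x, g x ^ q * κ x ∂μ) ^ (1 / q) * (∫⁻ x, κ x ∂μ) ^ (1 - 1 / q)) ^ q :=
        ENNReal.rpow_le_rpow hnorm hq₀.le
    _ = (∫⁻ x, κ x ∂μ) ^ (q - 1) * ∫⁻ x, g x ^ q * κ x ∂μ := by
        rw [ENNReal.mul_rpow_of_nonneg _ _ hq₀.le, ← ENNReal.rpow_mul, ← ENNReal.rpow_mul,
          one_div_mul_cancel hq₀.ne', ENNReal.rpow_one, hexp, mul_comm]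

theorem tsum_rpow_lintegral_add_mul_le {G ι : Type*} [AddCommGroup G] [MeasurableSpace G]
    [MeasurableAdd G] {μ : Measure G} [μ.IsAddLeftInvariant] [Countable ι] {p : ι → G} {q : ℝ}
    (hq : 1 ≤ q) {h κ : G → ℝ≥0∞} (hh : Measurable h) (hκ : Measurable κ) {S : ℝ≥0∞}
    (hS : ∀ y, ∑' i, κ (y - p i) ≤ S) :
    ∑' i, (∫⁻ η, h (p i + η) * κ η ∂μ) ^ q ≤
      (∫⁻ η, κ η ∂μ) ^ (q - 1) * ((∫⁻ ξ, h ξ ^ q ∂μ) * S) := by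
  have hκ_sub (i : ι) : Measurable fun ξ => κ (ξ - p i) := by
    simp only [sub_eq_add_neg]
    exact hκ.comp (measurable_add_const (-p i))
  have hjensen (i : ι) : (∫⁻ η, h (p i + η) * κ η ∂μ) ^ q ≤
      (∫⁻ η, κ η ∂μ) ^ (q - 1) * ∫⁻ ξ, h ξ ^ q * κ (ξ - p i) ∂μ := by
    rw [← lintegral_add_left_eq_self (fun ξ => h ξ ^ q * κ (ξ - p i)) (p i)]
    simp only [add_sub_cancel_left]
    exact rpow_lintegral_mul_le hq (hh.comp (measurable_const_add (p i))) hκ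
  refine (ENNReal.tsum_le_tsum hjensen).trans ?_
  have hswap : ∑' i, ∫⁻ ξ, h ξ ^ q * κ (ξ - p i) ∂μ = ∫⁻ ξ, ∑' i, h ξ ^ q * κ (ξ - p i) ∂μ :=
    (lintegral_tsum fun i => ((hh.pow_const q).mul (hκ_sub i)).aemeasurable).symm
  rw [ENNReal.tsum_mul_left, hswap, ← lintegral_mul_const _ (hh.pow_const q)]
  gcongr with ξ
  rw [ENNReal.tsum_mul_left]
  gcongr
  exact hS ξ

theorem pairwise_disjoint_ball_of_le_dist {X ι : Type*} [PseudoMetricSpace X] {p : ι → X} {r : ℝ}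
    (hp : Pairwise fun i j => r ≤ dist (p i) (p j)) :
    Pairwise fun i j => Disjoint (Metric.ball (p i) (r / 2)) (Metric.ball (p j) (r / 2)) :=
  fun _ _ hij => Metric.ball_disjoint_ball ((add_halves r).trans_le (hp hij))

theorem countable_of_pairwise_le_dist {X ι : Type*} [PseudoMetricSpace X]
    [TopologicalSpace.SeparableSpace X] {p : ι → X} {r : ℝ} (hr : 0 < r)
    (hp : Pairwise fun i j => r ≤ dist (p i) (p j)) : Countable ι :=
  (pairwise_disjoint_ball_of_le_dist hp).countable_of_isOpen_disjoint
    (fun _ => Metric.isOpen_ball) fun _ => Metric.nonempty_ball.2 (half_pos hr)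

theorem summable_indicator_rpow_comp {ι X : Type*} {u : X → ℝ} (hu : ∀ x, 0 ≤ u x) {S : Set X}
    {p : ι → X} {q : ℝ} (hq : 0 ≤ q) {C : ℝ≥0∞} (hC : C ≠ ∞) {g : X → ℝ≥0∞}
    (hle : ∀ x ∈ S, ENNReal.ofReal (u x) ≤ C * g x) (hg : ∑' i, g (p i) ^ q < ∞) :
    Summable fun i => S.indicator (fun x => u x ^ q) (p i) := by
  have hdom (i : ι) : ENNReal.ofReal (S.indicator (fun x => u x ^ q) (p i)) ≤
      C ^ q * g (p i) ^ q := by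
    by_cases hi : p i ∈ S
    · rw [indicator_of_mem hi, ← ENNReal.ofReal_rpow_of_nonneg (hu _) hq,
        ← ENNReal.mul_rpow_of_nonneg _ _ hq]
      exact ENNReal.rpow_le_rpow (hle _ hi) hq
    · rw [indicator_of_notMem hi, ENNReal.ofReal_zero]
      exact zero_le
  have hsum : ∑' i, ENNReal.ofReal (S.indicator (fun x => u x ^ q) (p i)) < ∞ := by
    refine (ENNReal.tsum_le_tsum hdom).trans_lt ?_
    rw [ENNReal.tsum_mul_left]
    exact ENNReal.mul_lt_top (ENNReal.rpow_lt_top_of_nonneg hq hC) hg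
  exact (ENNReal.summable_toReal hsum.ne).congr fun i =>
    ENNReal.toReal_ofReal (indicator_nonneg (fun x _ => Real.rpow_nonneg (hu x) q) (p i))

variable {E : Type*} [NormedAddCommGroup E] [NormedSpace ℝ E] [FiniteDimensional ℝ E]
  [MeasurableSpace E] [BorelSpace E] {ι : Type*} {p : ι → E} {r : ℝ}

-- Submultiplicativity makes `subexpKernel α (y - ·)` comparable to its value at the centre of each
-- of the disjoint balls around the `p i`, so the sum is at most a multiple of an integral.
theorem exists_tsum_subexpKernel_sub_le (hr : 0 < r)
    (hp : Pairwise fun i j => r ≤ dist (p i) (p j)) {α : ℝ} (hα₀ : 0 < α) (hα₁ : α ≤ 1) :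
    ∃ S ≠ ∞, ∀ y, ∑' i, ENNReal.ofReal (subexpKernel α (y - p i)) ≤ S := by
  have := countable_of_pairwise_le_dist hr hp
  let μ : Measure E := Measure.addHaar
  set c : ℝ≥0∞ := ENNReal.ofReal (Real.exp (-(r / 2) ^ α)) * μ (Metric.ball 0 (r / 2)) with hc
  have hc_zero : c ≠ 0 := mul_ne_zero (ENNReal.ofReal_pos.2 (Real.exp_pos _)).ne'
    (Metric.measure_ball_pos μ 0 (half_pos hr)).ne'
  have hc_top : c ≠ ∞ := ENNReal.mul_ne_top ENNReal.ofReal_ne_top measure_ball_lt_top.ne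
  refine ⟨(∫⁻ z, ENNReal.ofReal (subexpKernel α z) ∂μ) / c,
    ENNReal.div_ne_top (integrable_subexpKernel μ hα₀).lintegral_lt_top.ne hc_zero, fun y => ?_⟩
  have hball (i : ι) : ENNReal.ofReal (subexpKernel α (y - p i)) * c ≤
      ∫⁻ z in Metric.ball (p i) (r / 2), ENNReal.ofReal (subexpKernel α (y - z)) ∂μ := by
    rw [hc, ← mul_assoc, ← ENNReal.ofReal_mul (subexpKernel_pos _ _).le,
      ← Measure.addHaar_ball_center μ (p i), ← setLIntegral_const]
    refine setLIntegral_mono' measurableSet_ball fun z hz => ENNReal.ofReal_le_ofReal ?_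
    have hpz : Real.exp (-(r / 2) ^ α) ≤ subexpKernel α (p i - z) := by
      refine Real.exp_le_exp.2 (neg_le_neg (Real.rpow_le_rpow (norm_nonneg _) ?_ hα₀.le))
      rw [← dist_eq_norm, dist_comm]
      exact (Metric.mem_ball.1 hz).le
    calc _ ≤ subexpKernel α (y - p i) * subexpKernel α (p i - z) :=
          mul_le_mul_of_nonneg_left hpz (subexpKernel_pos _ _).le
      _ ≤ subexpKernel α (y - z) := by
          simpa only [sub_add_sub_cancel] using subexpKernel_mul_le hα₀.le hα₁ (y - p i) (p i - z)
  rw [ENNReal.le_div_iff_mul_le (.inl hc_zero) (.inl hc_top), ← ENNReal.tsum_mul_right]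
  calc _ ≤ ∑' i, ∫⁻ z in Metric.ball (p i) (r / 2), ENNReal.ofReal (subexpKernel α (y - z)) ∂μ :=
        ENNReal.tsum_le_tsum hball
    _ = ∫⁻ z in ⋃ i, Metric.ball (p i) (r / 2), ENNReal.ofReal (subexpKernel α (y - z)) ∂μ :=
        (lintegral_iUnion (fun _ => measurableSet_ball)
          (pairwise_disjoint_ball_of_le_dist hp) _).symm
    _ ≤ ∫⁻ z, ENNReal.ofReal (subexpKernel α (y - z)) ∂μ := setLIntegral_le_lintegral _ _
    _ = ∫⁻ z, ENNReal.ofReal (subexpKernel α z) ∂μ :=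
        lintegral_sub_left_eq_self (fun z => ENNReal.ofReal (subexpKernel α z)) y

theorem tsum_rpow_lintegral_subexpKernel_lt_top (μ : Measure E) [μ.IsAddHaarMeasure] (hr : 0 < r)
    (hp : Pairwise fun i j => r ≤ dist (p i) (p j)) {α : ℝ} (hα₀ : 0 < α) (hα₁ : α ≤ 1) {q : ℝ}
    (hq : 1 ≤ q) {h : E → ℝ≥0∞} (hh : Measurable h) (hh_top : ∫⁻ ξ, h ξ ^ q ∂μ < ∞) :
    ∑' i, (∫⁻ η, h (p i + η) * ENNReal.ofReal (subexpKernel α η) ∂μ) ^ q < ∞ := by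
  have := countable_of_pairwise_le_dist hr hp
  obtain ⟨S, hS_top, hS⟩ := exists_tsum_subexpKernel_sub_le hr hp hα₀ hα₁
  refine (tsum_rpow_lintegral_add_mul_le hq hh
    (continuous_subexpKernel hα₀.le).measurable.ennreal_ofReal hS).trans_lt ?_
  exact ENNReal.mul_lt_top (ENNReal.rpow_lt_top_of_nonneg (sub_nonneg.2 hq)
    (integrable_subexpKernel μ hα₀).lintegral_lt_top.ne) (ENNReal.mul_lt_top hh_top hS_top.lt_top)

end DiscreteYoung

section ModerateWeight

variable {E : Type*} [NormedAddCommGroup E] {α : ℝ} {ω : E → ℝ}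

/-- Positive weights moderate with respect to the submultiplicative weight `exp (k * ‖·‖ ^ α)` for
some `k`. An `s`-admissible weight is of this kind for `α = 1 / s`. -/
def IsSubexpModerate (α : ℝ) (ω : E → ℝ) : Prop :=
  (∀ x, 0 < ω x) ∧ ∃ C k : ℝ, 0 < C ∧ 0 < k ∧
    ∀ x y, ω (x + y) ≤ C * Real.exp (k * ‖x‖ ^ α) * ω y

theorem HasSubexpDecay.exists_norm_mul_le_mul_weight_add {Ψ : E → ℂ} (hΨ : HasSubexpDecay α Ψ)
    (hω : IsSubexpModerate α ω) :
    ∃ C, 0 ≤ C ∧ ∀ l η, ‖Ψ η‖ * ω l ≤ C * (ω (l + η) * subexpKernel α η) := by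
  obtain ⟨hω_pos, C, k, hC, -, hω⟩ := hω
  obtain ⟨B, hB_nonneg, hB⟩ := hΨ (k + 1)
  refine ⟨B * C, by positivity, fun l η => ?_⟩
  have hωl : ω l ≤ C * Real.exp (k * ‖η‖ ^ α) * ω (l + η) := by
    simpa only [neg_add_cancel_comm_assoc, norm_neg] using hω (-η) (l + η)
  calc ‖Ψ η‖ * ω l
      ≤ B * Real.exp (-(k + 1) * ‖η‖ ^ α) * (C * Real.exp (k * ‖η‖ ^ α) * ω (l + η)) :=
        mul_le_mul (hB η) hωl (hω_pos l).le ((norm_nonneg _).trans (hB η))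
    _ = B * C * (ω (l + η) * Real.exp (-(k + 1) * ‖η‖ ^ α + k * ‖η‖ ^ α)) := by
        rw [Real.exp_add]; ring
    _ = B * C * (ω (l + η) * subexpKernel α η) := by
        rw [subexpKernel]; ring_nf

theorem HasSubexpDecay.exists_norm_mul_le_mul_subexpKernel {Ψ : E → ℂ} (hΨ : HasSubexpDecay α Ψ)
    (hω : IsSubexpModerate α ω) (hα₀ : 0 ≤ α) (hα₁ : α ≤ 1) {δ : ℝ} (hδ : 0 < δ) :
    ∃ C, ∀ l η, δ * ‖l‖ ≤ ‖η‖ →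
      ‖Ψ η‖ * ω l ≤ C * (subexpKernel α (l + η) * subexpKernel α η) := by
  obtain ⟨hω_pos, C, k, hC, hk, hω⟩ := hω
  obtain ⟨B, hB_nonneg, hB⟩ := hΨ ((k + 1) * δ⁻¹ ^ α + 2)
  have hC_nonneg : 0 ≤ B * (C * ω 0) := mul_nonneg hB_nonneg (mul_pos hC (hω_pos 0)).le
  refine ⟨B * (C * ω 0), fun l η hl => ?_⟩
  have hωl : ω l ≤ C * Real.exp (k * ‖l‖ ^ α) * ω 0 := by simpa only [add_zero] using hω l 0
  have hl_pow : ‖l‖ ^ α ≤ δ⁻¹ ^ α * ‖η‖ ^ α := by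
    rw [← Real.mul_rpow (by positivity) (norm_nonneg η)]
    exact Real.rpow_le_rpow (norm_nonneg l) ((le_inv_mul_iff₀ hδ).2 hl) hα₀
  have hexp : -((k + 1) * δ⁻¹ ^ α + 2) * ‖η‖ ^ α + k * ‖l‖ ^ α ≤
      -‖l + η‖ ^ α + -‖η‖ ^ α := by
    have := mul_le_mul_of_nonneg_left hl_pow (by linarith : 0 ≤ k + 1)
    linarith [norm_add_rpow_le hα₀ hα₁ l η]
  calc ‖Ψ η‖ * ω l
      ≤ B * Real.exp (-((k + 1) * δ⁻¹ ^ α + 2) * ‖η‖ ^ α) *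
          (C * Real.exp (k * ‖l‖ ^ α) * ω 0) :=
        mul_le_mul (hB η) hωl (hω_pos l).le ((norm_nonneg _).trans (hB η))
    _ = B * (C * ω 0) * Real.exp (-((k + 1) * δ⁻¹ ^ α + 2) * ‖η‖ ^ α + k * ‖l‖ ^ α) := by
        rw [Real.exp_add]; ring
    _ ≤ B * (C * ω 0) * Real.exp (-‖l + η‖ ^ α + -‖η‖ ^ α) :=
        mul_le_mul_of_nonneg_left (Real.exp_le_exp.2 hexp) hC_nonneg
    _ = B * (C * ω 0) * (subexpKernel α (l + η) * subexpKernel α η) := by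
        rw [Real.exp_add, subexpKernel, subexpKernel]

end ModerateWeight

section ConeMajorant

variable {E : Type*} [NormedAddCommGroup E] {α : ℝ} {Γ : Set E} {u : E → ℝ}

/-- The function `u` cut off to `Γ`, plus the rapidly decaying kernel: its convolution with the
kernel dominates `u` on sets whose points are far from the complement of `Γ`. -/
def coneMajorant (α : ℝ) (Γ : Set E) (u : E → ℝ) (ξ : E) : ℝ :=
  Γ.indicator u ξ + subexpKernel α ξ

theorem le_coneMajorant {ξ : E} (hξ : ξ ∈ Γ) : u ξ ≤ coneMajorant α Γ u ξ := by
  rw [coneMajorant, indicator_of_mem hξ]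
  exact le_add_of_nonneg_right (subexpKernel_pos α ξ).le

theorem subexpKernel_le_coneMajorant (hu : ∀ ξ, 0 ≤ u ξ) (ξ : E) :
    subexpKernel α ξ ≤ coneMajorant α Γ u ξ :=
  le_add_of_nonneg_left (indicator_nonneg (fun ξ _ => hu ξ) ξ)

theorem exists_norm_mul_le_mul_coneMajorant {F Ψ : E → ℂ} {ω : E → ℝ} {Γ₀ : Set E} {M δ : ℝ}
    (hF : ∀ ξ, ‖F ξ‖ ≤ M) (hΨ : HasSubexpDecay α Ψ) (hω : IsSubexpModerate α ω) (hα₀ : 0 ≤ α)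
    (hα₁ : α ≤ 1) (hδ : 0 < δ) (hgap : ∀ l ∈ Γ₀, ∀ η, ‖η‖ < δ * ‖l‖ → l + η ∈ Γ) :
    ∃ C, 0 ≤ C ∧ ∀ l ∈ Γ₀, ∀ η, ‖F (l + η) * Ψ η‖ * ω l ≤
      C * (coneMajorant α Γ (fun ξ => ‖F ξ‖ * ω ξ) (l + η) * subexpKernel α η) := by
  obtain ⟨C₁, hC₁_nonneg, hC₁⟩ := hΨ.exists_norm_mul_le_mul_weight_add hω
  obtain ⟨C₂, hC₂⟩ := hΨ.exists_norm_mul_le_mul_subexpKernel hω hα₀ hα₁ hδ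
  set u : E → ℝ := fun ξ => ‖F ξ‖ * ω ξ
  have hu (ξ : E) : 0 ≤ u ξ := mul_nonneg (norm_nonneg _) (hω.1 ξ).le
  have hM : 0 ≤ M := (norm_nonneg _).trans (hF 0)
  refine ⟨max C₁ (M * C₂), hC₁_nonneg.trans (le_max_left _ _), fun l hl η => ?_⟩
  have hK := (subexpKernel_pos α η).le
  have hK' := (subexpKernel_pos α (l + η)).le
  rw [norm_mul, mul_assoc]
  by_cases hη : l + η ∈ Γ
  · calc ‖F (l + η)‖ * (‖Ψ η‖ * ω l)
        ≤ ‖F (l + η)‖ * (C₁ * (ω (l + η) * subexpKernel α η)) :=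
          mul_le_mul_of_nonneg_left (hC₁ l η) (norm_nonneg _)
      _ = C₁ * (u (l + η) * subexpKernel α η) := by ring
      _ ≤ max C₁ (M * C₂) * (coneMajorant α Γ u (l + η) * subexpKernel α η) := by
          have := hu (l + η)
          gcongr
          · exact le_max_left _ _
          · exact le_coneMajorant hη
  · have hδl : δ * ‖l‖ ≤ ‖η‖ := not_lt.1 fun h => hη (hgap l hl η h)
    calc ‖F (l + η)‖ * (‖Ψ η‖ * ω l)
        ≤ M * (C₂ * (subexpKernel α (l + η) * subexpKernel α η)) :=
          mul_le_mul (hF _) (hC₂ l η hδl) (mul_nonneg (norm_nonneg _) (hω.1 l).le) hM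
      _ = M * C₂ * (subexpKernel α (l + η) * subexpKernel α η) := (mul_assoc _ _ _).symm
      _ ≤ max C₁ (M * C₂) * (coneMajorant α Γ u (l + η) * subexpKernel α η) := by
          gcongr
          · exact le_max_right _ _
          · exact subexpKernel_le_coneMajorant hu _

variable [MeasurableSpace E]

theorem exists_ofReal_norm_mul_le_lintegral_coneMajorant {μ : Measure E} {F Ψ : E → ℂ} {ω : E → ℝ}
    {Γ₀ : Set E} {M δ : ℝ} (hF_rep : ∀ l, F l = ∫ η, F (l + η) * Ψ η ∂μ) (hF : ∀ ξ, ‖F ξ‖ ≤ M)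
    (hΨ : HasSubexpDecay α Ψ) (hω : IsSubexpModerate α ω) (hα₀ : 0 ≤ α) (hα₁ : α ≤ 1) (hδ : 0 < δ)
    (hgap : ∀ l ∈ Γ₀, ∀ η, ‖η‖ < δ * ‖l‖ → l + η ∈ Γ) :
    ∃ C, ∀ l ∈ Γ₀, ENNReal.ofReal (‖F l‖ * ω l) ≤ ENNReal.ofReal C *
      ∫⁻ η, ENNReal.ofReal (coneMajorant α Γ (fun ξ => ‖F ξ‖ * ω ξ) (l + η)) *
        ENNReal.ofReal (subexpKernel α η) ∂μ := by
  obtain ⟨C, hC_nonneg, hC⟩ := exists_norm_mul_le_mul_coneMajorant hF hΨ hω hα₀ hα₁ hδ hgap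
  refine ⟨C, fun l hl => ?_⟩
  have hmaj (η : E) : ‖F (l + η) * Ψ η‖ₑ * ENNReal.ofReal (ω l) ≤ ENNReal.ofReal C *
      (ENNReal.ofReal (coneMajorant α Γ (fun ξ => ‖F ξ‖ * ω ξ) (l + η)) *
        ENNReal.ofReal (subexpKernel α η)) := by
    rw [← ofReal_norm, ← ENNReal.ofReal_mul (norm_nonneg _),
      ← ENNReal.ofReal_mul' (subexpKernel_pos α η).le, ← ENNReal.ofReal_mul hC_nonneg]
    exact ENNReal.ofReal_le_ofReal (hC l hl η)
  calc ENNReal.ofReal (‖F l‖ * ω l)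
      = ‖∫ η, F (l + η) * Ψ η ∂μ‖ₑ * ENNReal.ofReal (ω l) := by
        rw [← hF_rep, ENNReal.ofReal_mul (norm_nonneg _), ofReal_norm]
    _ ≤ (∫⁻ η, ‖F (l + η) * Ψ η‖ₑ ∂μ) * ENNReal.ofReal (ω l) := by
        gcongr; exact enorm_integral_le_lintegral_enorm _
    _ = ∫⁻ η, ‖F (l + η) * Ψ η‖ₑ * ENNReal.ofReal (ω l) ∂μ :=
        (lintegral_mul_const' _ _ ENNReal.ofReal_ne_top).symm
    _ ≤ _ := (lintegral_mono hmaj).trans_eq (lintegral_const_mul' _ _ ENNReal.ofReal_ne_top)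

variable [BorelSpace E]

theorem measurable_coneMajorant (hα : 0 ≤ α) (hΓ : MeasurableSet Γ) (hu : Measurable u) :
    Measurable (coneMajorant α Γ u) :=
  (hu.indicator hΓ).add (continuous_subexpKernel hα).measurable

theorem lintegral_rpow_coneMajorant_lt_top [NormedSpace ℝ E] [FiniteDimensional ℝ E]
    (μ : Measure E) [μ.IsAddHaarMeasure] (hα : 0 < α) (hΓ : MeasurableSet Γ) (hu : Measurable u)
    (hu_nonneg : ∀ ξ, 0 ≤ u ξ) {q : ℝ} (hq : 1 ≤ q)
    (h : ∫⁻ ξ in Γ, ENNReal.ofReal (u ξ ^ q) ∂μ < ∞) :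
    ∫⁻ ξ, ENNReal.ofReal (coneMajorant α Γ u ξ) ^ q ∂μ < ∞ := by
  have hq₀ : 0 < q := one_pos.trans_le hq
  have hu_pow (ξ : E) : ENNReal.ofReal (Γ.indicator u ξ) ^ q =
      Γ.indicator (fun ξ => ENNReal.ofReal (u ξ ^ q)) ξ := by
    by_cases hξ : ξ ∈ Γ
    · simp only [indicator_of_mem hξ, ENNReal.ofReal_rpow_of_nonneg (hu_nonneg ξ) hq₀.le]
    · simp only [indicator_of_notMem hξ, ENNReal.ofReal_zero, ENNReal.zero_rpow_of_pos hq₀]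
  have hu_top : ∫⁻ ξ, ENNReal.ofReal (Γ.indicator u ξ) ^ q ∂μ < ∞ := by
    simpa only [hu_pow, lintegral_indicator hΓ] using h
  have hK_top : ∫⁻ ξ, ENNReal.ofReal (subexpKernel α ξ) ^ q ∂μ < ∞ := by
    refine (lintegral_mono fun ξ => ?_).trans_lt (integrable_subexpKernel μ hα).lintegral_lt_top
    exact ENNReal.rpow_le_self_of_le_one
      (ENNReal.ofReal_le_one.2 (subexpKernel_le_one α ξ)) hq
  have hadd (ξ : E) : ENNReal.ofReal (coneMajorant α Γ u ξ) =
      ENNReal.ofReal (Γ.indicator u ξ) + ENNReal.ofReal (subexpKernel α ξ) :=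
    ENNReal.ofReal_add (indicator_nonneg (fun ξ _ => hu_nonneg ξ) ξ) (subexpKernel_pos α ξ).le
  simp only [hadd]
  exact ENNReal.lintegral_rpow_add_lt_top_of_lintegral_rpow_lt_top
    (hu.indicator hΓ).ennreal_ofReal.aemeasurable hu_top hK_top hq

end ConeMajorant

section FourierLebesgue

open Function
open scoped FourierTransform

theorem FT_eq_fourier (f : EuclideanSpace ℝ (Fin d) → ℂ) (ξ : EuclideanSpace ℝ (Fin d)) :
    FT f ξ = ((2 * Real.pi) ^ (-(d : ℝ) / 2) : ℝ) * 𝓕 f ((2 * Real.pi)⁻¹ • ξ) := by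
  rw [FT, Real.fourier_eq']
  congr 1
  refine integral_congr_ae (ae_of_all _ fun x => ?_)
  have hphase : -2 * Real.pi * ⟪x, (2 * Real.pi)⁻¹ • ξ⟫ = -⟪x, ξ⟫ := by
    rw [real_inner_smul_right]
    field_simp
  simp only [hphase, ofReal_neg, smul_eq_mul, mul_comm (f x)]

theorem continuous_FT {f : EuclideanSpace ℝ (Fin d) → ℂ} (hf : Integrable f) :
    Continuous (FT f) := by
  simp only [funext (FT_eq_fourier f)]
  exact continuous_const.mul ((continuous_fourier hf).comp (continuous_const_smul _))

theorem exists_norm_FT_le (f : EuclideanSpace ℝ (Fin d) → ℂ) : ∃ M, ∀ ξ, ‖FT f ξ‖ ≤ M := by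
  refine ⟨(2 * Real.pi) ^ (-(d : ℝ) / 2) * ∫ x, ‖f x‖, fun ξ => ?_⟩
  rw [FT_eq_fourier, norm_mul, norm_real, Real.norm_of_nonneg (by positivity)]
  gcongr
  exact norm_fourier_le_integral_norm f _

theorem FT_eq_integral_FT_add_mul {f Ψ : EuclideanSpace ℝ (Fin d) → ℂ} {R : ℝ}
    (hf : Integrable f) (hf_supp : support f ⊆ Metric.closedBall 0 (2 * Real.pi * R))
    (hΨ : IsFourierCutoff R Ψ) (l : EuclideanSpace ℝ (Fin d)) :
    FT f l = ∫ η, FT f (l + η) * Ψ η := by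
  have hcutoff : (fun x => f x * 𝓕 Ψ ((2 * Real.pi)⁻¹ • x)) = f := by
    funext x
    by_cases hx : f x = 0
    · rw [hx, zero_mul]
    · have hxR : ‖(2 * Real.pi)⁻¹ • x‖ ≤ R := by
        rw [norm_smul, Real.norm_of_nonneg (by positivity), inv_mul_le_iff₀ (by positivity)]
        exact mem_closedBall_zero_iff.1 (hf_supp hx)
      rw [hΨ.2 _ hxR, mul_one]
  have hrep := fourier_mul_fourier_smul hf hΨ.1 (2 * Real.pi)⁻¹ ((2 * Real.pi)⁻¹ • l)
  rw [hcutoff] at hrep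
  simp only [FT_eq_fourier, hrep, smul_add, mul_assoc, integral_const_mul]

theorem exists_hasSubexpDecay_FT_eq_integral {α : ℝ} (hα₀ : 0 < α) (hα₁ : α < 1)
    {f : EuclideanSpace ℝ (Fin d) → ℂ} (hf : Integrable f) (hfc : HasCompactSupport f) :
    ∃ Ψ : EuclideanSpace ℝ (Fin d) → ℂ, HasSubexpDecay α Ψ ∧
      ∀ l, FT f l = ∫ η, FT f (l + η) * Ψ η := by
  obtain ⟨R, hR⟩ := hfc.isCompact.isBounded.subset_closedBall 0
  obtain ⟨Ψ, hΨ, hΨ_decay⟩ := exists_isFourierCutoff_hasSubexpDecay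
    (V := EuclideanSpace ℝ (Fin d)) hα₀ hα₁ ((2 * Real.pi)⁻¹ * R)
  refine ⟨Ψ, hΨ_decay, FT_eq_integral_FT_add_mul hf ?_ hΨ⟩
  rw [mul_inv_cancel_left₀ (by positivity)]
  exact (subset_tsupport f).trans hR

theorem IsSAdmissible.isSubexpModerate {s : ℝ} {ω : EuclideanSpace ℝ (Fin d) → ℝ}
    (hω : IsSAdmissible s ω) : IsSubexpModerate (1 / s) ω := by
  obtain ⟨-, hω_pos, v, -, -, -, -, C₀, k₀, C₁, hC₀, hk₀, hC₁, hv, hωv⟩ := hω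
  refine ⟨hω_pos, C₁ * C₀, k₀, mul_pos hC₁ hC₀, hk₀, fun x y => (hωv x y).trans ?_⟩
  rw [mul_assoc C₁ C₀]
  exact mul_le_mul_of_nonneg_right (mul_le_mul_of_nonneg_left (hv x) hC₁.le) (hω_pos y).le

theorem IsCone.exists_forall_add_mem {Γ₀ Γ : Set (EuclideanSpace ℝ (Fin d))} (hΓ₀ : IsCone Γ₀)
    (hΓo : IsOpen Γ) (hΓ : IsCone Γ) (hsub : closure Γ₀ \ {0} ⊆ Γ) :
    ∃ δ : ℝ, 0 < δ ∧ ∀ l ∈ Γ₀, ∀ η, ‖η‖ < δ * ‖l‖ → l + η ∈ Γ := by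
  have hcompact : IsCompact (closure Γ₀ ∩ Metric.sphere 0 1) :=
    (isCompact_sphere 0 1).inter_left isClosed_closure
  have hsphere : closure Γ₀ ∩ Metric.sphere 0 1 ⊆ Γ := fun x hx =>
    hsub ⟨hx.1, ne_zero_of_mem_unit_sphere ⟨x, hx.2⟩⟩
  obtain ⟨δ, hδ, hthick⟩ := hcompact.exists_thickening_subset_open hΓo hsphere
  refine ⟨δ, hδ, fun l hl η hη => ?_⟩
  have hl_pos : 0 < ‖l‖ := norm_pos_iff.2 fun h => hΓ₀.1 (h ▸ hl)
  have hunit : ‖l‖⁻¹ • l ∈ closure Γ₀ ∩ Metric.sphere 0 1 :=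
    ⟨subset_closure (hΓ₀.2 l hl _ (inv_pos.2 hl_pos)), by simp [norm_smul, hl_pos.ne']⟩
  have hnear : dist (‖l‖⁻¹ • (l + η)) (‖l‖⁻¹ • l) < δ := by
    rw [dist_eq_norm, ← smul_sub, add_sub_cancel_left, norm_smul, norm_inv, norm_norm,
      inv_mul_lt_iff₀ hl_pos, mul_comm]
    exact hη
  simpa only [smul_inv_smul₀ hl_pos.ne'] using
    hΓ.2 _ (hthick (Metric.mem_thickening_iff.2 ⟨_, hunit, hnear⟩)) ‖l‖ hl_pos

theorem exists_le_dist_latPt {A : Matrix (Fin d) (Fin d) ℝ} (hA : IsUnit A.det) :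
    ∃ r > 0, Pairwise fun k l => r ≤ dist (latPt A k) (latPt A l) := by
  let T : EuclideanSpace ℝ (Fin d) →L[ℝ] (Fin d → ℝ) := LinearMap.toContinuousLinearMap
    (A⁻¹.mulVecLin ∘ₗ (EuclideanSpace.equiv (Fin d) ℝ).toLinearEquiv.toLinearMap)
  have hT (k : Fin d → ℤ) : T (latPt A k) = fun i => (k i : ℝ) := by
    change A⁻¹.mulVec (A.mulVec _) = _
    rw [Matrix.mulVec_mulVec, Matrix.nonsing_inv_mul _ hA, Matrix.one_mulVec]
  refine ⟨(‖T‖ + 1)⁻¹, by positivity, fun k l hkl => ?_⟩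
  obtain ⟨i, hi⟩ := Function.ne_iff.1 hkl
  have hone : (1 : ℝ) ≤ |(k i : ℝ) - l i| := by
    exact_mod_cast Int.one_le_abs (sub_ne_zero.2 hi)
  rw [inv_le_iff_one_le_mul₀' (by positivity)]
  calc (1 : ℝ) ≤ ‖(T (latPt A k) - T (latPt A l)) i‖ := by rw [hT, hT]; exact hone
    _ ≤ ‖T (latPt A k - latPt A l)‖ := by rw [map_sub]; exact norm_le_pi_norm _ i
    _ ≤ ‖T‖ * dist (latPt A k) (latPt A l) := by rw [dist_eq_norm]; exact T.le_opNorm _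
    _ ≤ (‖T‖ + 1) * dist (latPt A k) (latPt A l) := by gcongr; linarith

theorem stmt12_general {ι : Type*} {p : ι → EuclideanSpace ℝ (Fin d)} {r : ℝ} (hr : 0 < r)
    (hp : Pairwise fun i j => r ≤ dist (p i) (p j)) {α q : ℝ} (hα₀ : 0 < α) (hα₁ : α < 1)
    (hq : 1 ≤ q) {ω : EuclideanSpace ℝ (Fin d) → ℝ} (hω_meas : Measurable ω)
    (hω : IsSubexpModerate α ω) {f : EuclideanSpace ℝ (Fin d) → ℂ} (hf : Integrable f)
    (hfc : HasCompactSupport f) {Γ₀ Γ : Set (EuclideanSpace ℝ (Fin d))} (h₀c : IsCone Γ₀)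
    (hΓo : IsOpen Γ) (hΓc : IsCone Γ) (hsub : closure Γ₀ \ {0} ⊆ Γ)
    (h : ∫⁻ ξ in Γ, ENNReal.ofReal ((‖FT f ξ‖ * ω ξ) ^ q) < ∞) :
    Summable fun i => Γ₀.indicator (fun ξ => (‖FT f ξ‖ * ω ξ) ^ q) (p i) := by
  set u := fun ξ => ‖FT f ξ‖ * ω ξ
  have hu_nonneg (ξ) : 0 ≤ u ξ := mul_nonneg (norm_nonneg _) (hω.1 ξ).le
  have hu : Measurable u := (continuous_FT hf).norm.measurable.mul hω_meas
  obtain ⟨M, hM⟩ := exists_norm_FT_le f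
  obtain ⟨Ψ, hΨ, hrep⟩ := exists_hasSubexpDecay_FT_eq_integral hα₀ hα₁ hf hfc
  obtain ⟨δ, hδ, hgap⟩ := h₀c.exists_forall_add_mem hΓo hΓc hsub
  obtain ⟨C, hC⟩ := exists_ofReal_norm_mul_le_lintegral_coneMajorant
    hrep hM hΨ hω hα₀.le hα₁.le hδ hgap
  have hyoung := tsum_rpow_lintegral_subexpKernel_lt_top volume hr hp hα₀ hα₁.le hq
    (measurable_coneMajorant hα₀.le hΓo.measurableSet hu).ennreal_ofReal
    (lintegral_rpow_coneMajorant_lt_top volume hα₀ hΓo.measurableSet hu hu_nonneg hq h)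
  exact summable_indicator_rpow_comp hu_nonneg (zero_le_one.trans hq) ENNReal.ofReal_ne_top hC
    hyoung

end FourierLebesgue

theorem stmt12 {d : ℕ} (s q : ℝ) (hs : 1 < s) (hq : 1 ≤ q)
    (ω : EuclideanSpace ℝ (Fin d) → ℝ) (hω : IsSAdmissible s ω)
    (f : EuclideanSpace ℝ (Fin d) → ℂ) (hf : Integrable f) (hfc : HasCompactSupport f)
    (Γ₀ Γ : Set (EuclideanSpace ℝ (Fin d)))
    (h₀o : IsOpen Γ₀) (h₀c : IsCone Γ₀) (hΓo : IsOpen Γ) (hΓc : IsCone Γ)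
    (hsub : closure Γ₀ \ {0} ⊆ Γ)
    (A : Matrix (Fin d) (Fin d) ℝ) (hA : IsUnit A.det)
    (h : (∫⁻ ξ in Γ, ENNReal.ofReal ((‖FT f ξ‖ * ω ξ) ^ q)) < ∞) :
    Summable fun k : Fin d → ℤ =>
      Γ₀.indicator (fun ξ => (‖FT f ξ‖ * ω ξ) ^ q) (latPt A k) := by
  obtain ⟨r, hr, hp⟩ := exists_le_dist_latPt hA
  have hs₀ : 0 < s := one_pos.trans hs
  exact stmt12_general hr hp (one_div_pos.2 hs₀) ((div_lt_one hs₀).2 hs) hq hω.1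
    hω.isSubexpModerate hf hfc h₀c hΓo hΓc hsub h

end Paper
end
end

section
/- Let s > 1, q ∈ [1,∞), let ω be an s-admissible weight on ℝ^d, let A be an invertible d×d real matrix, 0 < c < 2π, Λ₂ = c·(Aᵀ)^{−1}(ℤ^d), and D₁ = x₁ + A([0,1]^d) for some x₁ ∈ ℝ^d. Let f ∈ L¹(ℝ^d) whose support is a compact subset of the interior of D₁, and let Γ₀ ⊂⊂ Γ be open cones in ℝ^d ∖ {0}. If Σ_{λ ∈ Λ₂ ∩ Γ} (|f̂(λ)|·ω(λ))^q < ∞, then ∫_{Γ₀} (|f̂(ξ)|·ω(ξ))^q dξ < ∞. -/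
open MeasureTheory Complex Set
open scoped ENNReal RealInnerProductSpace NNReal

noncomputable section

namespace Paper

variable {d : ℕ}

/-!
In one variable, Poisson summation for a smooth bump `ψ` equal to `1` on `[0, c]` and vanishing on
the translates of `[0, c]` by nonzero multiples of `2π` shows that every exponential with frequency
in `[0, c]` is recovered from its integer samples by the kernel `ψ̂`. The room left between `c` and
`2π` allows this kernel to be multiplied by an infinite product `∏ sinc (a_j τ)` with small `∑ a_j`
without losing the recovery property, and `a_j ~ j ^ (-s)` makes it decay like
`exp (-N |τ| ^ (1/s))` for any prescribed `N`.

Taking products over the coordinates and integrating against `f`, one gets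
`|f̂(ξ)| ≤ C ∑_λ exp (-N |ξ - λ| ^ (1/s)) |f̂(λ)|`, and the weight `ω` only costs part of the
exponential factor. For `ξ ∈ Γ₀` and `λ ∉ Γ` one has `|λ| ≤ R |ξ - λ|`, so the terms off the cone
are bounded by multiples of `exp (-|ξ - λ| ^ (1/s)) exp (-|λ| ^ (1/s))`. Hence `|f̂| ω` on `Γ₀` is
dominated by the convolution of an `ℓ^q` sequence on the lattice with an integrable kernel, and
Schur's test concludes.
-/

section LineSums

lemma one_div_one_add_sub_sq_le (τ : ℝ) (n : ℤ) :
    1 / (1 + (τ - n) ^ 2) ≤ 3 * (1 / (1 + ((⌊τ⌋ - n : ℤ) : ℝ) ^ 2)) := by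
  have h₀ : 0 ≤ Int.fract τ := Int.fract_nonneg τ
  have h₁ : Int.fract τ < 1 := Int.fract_lt_one τ
  have hτ : τ - n = ((⌊τ⌋ - n : ℤ) : ℝ) + Int.fract τ := by
    push_cast
    linarith [Int.floor_add_fract τ]
  rw [hτ, mul_one_div, div_le_div_iff₀ (by positivity) (by positivity)]
  generalize ((⌊τ⌋ - n : ℤ) : ℝ) = m
  nlinarith [sq_nonneg (2 * m + 3 * Int.fract τ)]

lemma summable_one_div_one_add_int_sq : Summable fun n : ℤ => 1 / (1 + (n : ℝ) ^ 2) := by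
  refine Summable.of_norm_bounded_eventually (Real.summable_one_div_int_pow.mpr one_lt_two) ?_
  rw [Filter.eventually_cofinite]
  refine (Set.finite_singleton (0 : ℤ)).subset fun n hn => ?_
  by_contra h0
  have hn0 : (0 : ℝ) < (n : ℝ) ^ 2 := by
    have : (n : ℝ) ≠ 0 := Int.cast_ne_zero.mpr h0
    positivity
  refine hn ?_
  rw [Real.norm_of_nonneg (by positivity)]
  exact one_div_le_one_div_of_le hn0 (by linarith)

lemma summable_one_div_one_add_floor_sub_sq (τ : ℝ) :
    Summable fun n : ℤ => 3 * (1 / (1 + ((⌊τ⌋ - n : ℤ) : ℝ) ^ 2)) :=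
  ((Equiv.subLeft ⌊τ⌋).summable_iff.mpr summable_one_div_one_add_int_sq).mul_left 3

lemma summable_one_div_one_add_sub_sq (τ : ℝ) : Summable fun n : ℤ => 1 / (1 + (τ - n) ^ 2) :=
  .of_nonneg_of_le (fun _ => by positivity) (one_div_one_add_sub_sq_le τ)
    (summable_one_div_one_add_floor_sub_sq τ)

lemma tsum_one_div_one_add_sub_sq_le (τ : ℝ) :
    ∑' n : ℤ, 1 / (1 + (τ - n) ^ 2) ≤ 3 * ∑' n : ℤ, 1 / (1 + (n : ℝ) ^ 2) := by
  calc ∑' n : ℤ, 1 / (1 + (τ - n) ^ 2)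
      ≤ ∑' n : ℤ, 3 * (1 / (1 + ((⌊τ⌋ - n : ℤ) : ℝ) ^ 2)) :=
        (summable_one_div_one_add_sub_sq τ).tsum_le_tsum (one_div_one_add_sub_sq_le τ)
          (summable_one_div_one_add_floor_sub_sq τ)
    _ = 3 * ∑' n : ℤ, 1 / (1 + (n : ℝ) ^ 2) := by
        rw [tsum_mul_left]
        exact congrArg (3 * ·)
          ((Equiv.subLeft ⌊τ⌋).tsum_eq fun n : ℤ => 1 / (1 + (n : ℝ) ^ 2))

end LineSums

section PoissonKernel

open scoped FourierTransform ContDiff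

/-- `K` interpolates the frequencies in `J` from the integers: every exponential
`τ ↦ exp (-i τ y)` with `y ∈ J` is recovered from its integer samples by the kernel `K`. -/
def IsSamplingKernel (K : ℝ → ℂ) (J : Set ℝ) : Prop :=
  ∀ τ, ∀ y ∈ J,
    HasSum (fun n : ℤ => K (τ - n) * Circle.exp (-(n * y))) (Circle.exp (-(τ * y)) : ℂ)

lemma summable_mul_circleExp {K : ℝ → ℂ} {C : ℝ} (hK : ∀ τ, ‖K τ‖ ≤ C * (1 / (1 + τ ^ 2)))
    (τ y : ℝ) : Summable fun n : ℤ => K (τ - n) * Circle.exp (-(n * y)) :=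
  .of_norm_bounded ((summable_one_div_one_add_sub_sq τ).mul_left C) fun n => by
    simpa only [norm_mul, Circle.norm_coe, mul_one] using hK (τ - n)

lemma exists_norm_fourier_le {ψ : ℝ → ℂ} (hψc : HasCompactSupport ψ) (hψ : ContDiff ℝ ∞ ψ) :
    ∃ C, ∀ τ, ‖𝓕 ψ τ‖ ≤ C * (1 / (1 + τ ^ 2)) := by
  obtain ⟨C₀, -, h₀⟩ := (𝓕 (hψc.toSchwartzMap hψ)).decay 0 0
  obtain ⟨C₂, -, h₂⟩ := (𝓕 (hψc.toSchwartzMap hψ)).decay 2 0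
  refine ⟨C₀ + C₂, fun τ => ?_⟩
  have h₀τ := h₀ τ
  have h₂τ := h₂ τ
  simp only [norm_iteratedFDeriv_zero, pow_zero, one_mul, Real.norm_eq_abs, sq_abs,
    SchwartzMap.fourier_coe] at h₀τ h₂τ
  rw [mul_one_div, le_div_iff₀ (by positivity)]
  calc ‖𝓕 ψ τ‖ * (1 + τ ^ 2) = ‖𝓕 ψ τ‖ + τ ^ 2 * ‖𝓕 ψ τ‖ := by ring
    _ ≤ C₀ + C₂ := add_le_add h₀τ h₂τ

lemma fourier_mul_circleExp (ψ : ℝ → ℂ) (τ w : ℝ) :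
    𝓕 (fun x => ψ x * Circle.exp (-(τ * (2 * Real.pi * x)))) w = 𝓕 ψ (w + τ) := by
  simp only [Real.fourier_real_eq, Circle.smul_def, smul_eq_mul, Real.fourierChar_apply,
    Circle.coe_exp]
  refine integral_congr_ae (.of_forall fun x => ?_)
  dsimp only
  rw [mul_left_comm, ← Complex.exp_add, mul_comm]
  push_cast
  ring_nf

lemma tsum_fourier_mul_circleExp {ψ : ℝ → ℂ} (hψc : HasCompactSupport ψ) (hψ : ContDiff ℝ ∞ ψ)
    (τ y : ℝ) : ∑' n : ℤ, 𝓕 ψ (τ - n) * Circle.exp (-(n * (2 * Real.pi * y))) =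
      ∑' n : ℤ, ψ (y + n) * Circle.exp (-(τ * (2 * Real.pi * (y + n)))) := by
  let g : ℝ → ℂ := fun x => ψ x * Circle.exp (-(τ * (2 * Real.pi * x)))
  have hgc : HasCompactSupport g := hψc.mul_right
  have hphase : ContDiff ℝ ∞ fun x : ℝ => -(τ * (2 * Real.pi * x)) := by fun_prop
  have hg : ContDiff ℝ ∞ g := by
    simp only [g, Circle.coe_exp]
    exact hψ.mul (Complex.contDiff_exp.comp
      ((Complex.ofRealCLM.contDiff.comp hphase).mul contDiff_const))
  have poisson := SchwartzMap.tsum_eq_tsum_fourier (hgc.toSchwartzMap hg) y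
  rw [← (Equiv.neg ℤ).tsum_eq (fun n => 𝓕 ψ (τ - n) * _)]
  refine Eq.trans (tsum_congr fun n => ?_) poisson.symm
  rw [SchwartzMap.fourier_coe]
  change _ = 𝓕 g n * _
  rw [fourier_mul_circleExp, fourier_coe_apply, Circle.coe_exp, Equiv.neg_apply]
  push_cast
  ring_nf

lemma isSamplingKernel_fourier {ψ : ℝ → ℂ} (hψc : HasCompactSupport ψ) (hψ : ContDiff ℝ ∞ ψ)
    {J : Set ℝ} (h_one : ∀ y ∈ J, ψ (y / (2 * Real.pi)) = 1)
    (h_zero : ∀ y ∈ J, ∀ n : ℤ, n ≠ 0 → ψ (y / (2 * Real.pi) + n) = 0) :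
    IsSamplingKernel (𝓕 ψ) J := by
  intro τ y hy
  obtain ⟨C, hC⟩ := exists_norm_fourier_le hψc hψ
  have poisson : ∑' n : ℤ, 𝓕 ψ (τ - n) * Circle.exp (-(n * y)) = Circle.exp (-(τ * y)) := by
    have h := tsum_fourier_mul_circleExp hψc hψ τ (y / (2 * Real.pi))
    rw [tsum_eq_single (L := .unconditional ℤ)
      (f := fun n : ℤ => ψ (y / (2 * Real.pi) + n) * _) 0
      fun n hn => by rw [h_zero y hy n hn, zero_mul], Int.cast_zero, add_zero, h_one y hy,
      one_mul, mul_div_cancel₀ _ Real.two_pi_pos.ne'] at h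
    exact h
  exact poisson ▸ (summable_mul_circleExp hC τ y).hasSum

lemma exists_isSamplingKernel {c : ℝ} (hc0 : 0 ≤ c) (hc : c < 2 * Real.pi) :
    ∃ ε > 0, ∃ (K : ℝ → ℂ) (C : ℝ), (∀ τ, ‖K τ‖ ≤ C * (1 / (1 + τ ^ 2))) ∧
      IsSamplingKernel K (Icc (-ε) (c + ε)) := by
  obtain ⟨ε, hε, hcε⟩ : ∃ ε > 0, c + 3 * ε = 2 * Real.pi :=
    ⟨(2 * Real.pi - c) / 3, by linarith, by ring⟩
  have h2π : 0 < 2 * Real.pi := Real.two_pi_pos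
  let B : ContDiffBump (c / 2 / (2 * Real.pi)) :=
    ⟨(c / 2 + ε) / (2 * Real.pi), (c / 2 + 2 * ε) / (2 * Real.pi), by positivity,
      by gcongr; linarith⟩
  let ψ : ℝ → ℂ := fun x => (B x : ℂ)
  have hψc : HasCompactSupport ψ := B.hasCompactSupport.comp_left Complex.ofReal_zero
  have hψ : ContDiff ℝ ∞ ψ := Complex.ofRealCLM.contDiff.comp B.contDiff
  obtain ⟨C, hC⟩ := exists_norm_fourier_le hψc hψ
  refine ⟨ε, hε, 𝓕 ψ, C, hC, isSamplingKernel_fourier hψc hψ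
    (fun y hy => ?_) fun y hy n hn => ?_⟩
  · have hB : B (y / (2 * Real.pi)) = 1 := B.one_of_mem_closedBall (by
      rw [Metric.mem_closedBall, Real.dist_eq, ← sub_div, abs_div, abs_of_pos h2π]
      refine div_le_div_of_nonneg_right (abs_le.mpr ?_) h2π.le
      exact ⟨by linarith [hy.1], by linarith [hy.2]⟩)
    simp only [ψ, hB, Complex.ofReal_one]
  · have hB : B (y / (2 * Real.pi) + n) = 0 := B.zero_of_le_dist (by
      have hdist : y / (2 * Real.pi) + n - c / 2 / (2 * Real.pi) =
          (y + n * (2 * Real.pi) - c / 2) / (2 * Real.pi) := by field_simp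
      rw [Real.dist_eq, hdist, abs_div, abs_of_pos h2π]
      refine div_le_div_of_nonneg_right (le_abs.mpr ?_) h2π.le
      rcases lt_or_gt_of_ne hn with h | h
      · have : (n : ℝ) ≤ -1 := by exact_mod_cast Int.le_sub_one_of_lt h
        right; nlinarith [hy.2]
      · have : (1 : ℝ) ≤ n := by exact_mod_cast h
        left; nlinarith [hy.1])
    simp only [ψ, hB, Complex.ofReal_zero]

end PoissonKernel

section SincProducts

variable {K : ℝ → ℂ} {C l r : ℝ}

lemma integral_circleExp_mul (r : ℝ) :
    ∫ u in (-1 : ℝ)..1, (Circle.exp (r * u) : ℂ) = 2 * (Real.sinc r : ℂ) := by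
  rcases eq_or_ne r 0 with rfl | hr
  · simp only [zero_mul, Circle.exp_zero, Circle.coe_one, intervalIntegral.integral_const,
      Real.sinc_zero, Complex.ofReal_one, Complex.real_smul]
    norm_num
  · have h := intervalIntegral.smul_integral_comp_mul_left (a := -1) (b := 1)
      (fun t : ℝ => cexp (t * I)) r
    rw [mul_neg, mul_one, integral_exp_mul_I_eq_sinc, Complex.real_smul] at h
    simp only [Circle.coe_exp]
    exact mul_left_cancel₀ (Complex.ofReal_ne_zero.mpr hr) (by rw [h]; ring)

lemma abs_sinc_sub_one_le (t : ℝ) : |Real.sinc t - 1| ≤ |t| := by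
  have hbound : ‖∫ u in (-1 : ℝ)..1, ((Circle.exp (t * u) : ℂ) - 1)‖ ≤ |t| * |1 - (-1)| := by
    refine intervalIntegral.norm_integral_le_of_norm_le_const fun u hu => ?_
    rw [uIoc_of_le (by norm_num)] at hu
    rw [Circle.coe_exp, mul_comm _ I]
    calc ‖cexp (I * (t * u : ℝ)) - 1‖ ≤ |t * u| := Real.norm_exp_I_mul_ofReal_sub_one_le
      _ = |t| * |u| := abs_mul t u
      _ ≤ |t| := mul_le_of_le_one_right (abs_nonneg t) (abs_le.mpr ⟨hu.1.le, hu.2⟩)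
  have hint : ∫ u in (-1 : ℝ)..1, ((Circle.exp (t * u) : ℂ) - 1) =
      ((2 * (Real.sinc t - 1) : ℝ) : ℂ) := by
    rw [intervalIntegral.integral_sub (Continuous.intervalIntegrable (by fun_prop) _ _)
      intervalIntegrable_const, integral_circleExp_mul, intervalIntegral.integral_const]
    push_cast
    norm_num
    ring
  rw [hint, Complex.norm_real, Real.norm_eq_abs, abs_mul] at hbound
  norm_num at hbound
  linarith

lemma IsSamplingKernel.hasSum_shift {J : Set ℝ} (h : IsSamplingKernel K J) (τ : ℝ) {y δ : ℝ}
    (hy : y + δ ∈ J) : HasSum (fun n : ℤ => K (τ - n) * Circle.exp (-(n * y)) *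
      Circle.exp ((τ - n) * δ)) (Circle.exp (-(τ * y)) : ℂ) := by
  have total : (Circle.exp (-(τ * (y + δ))) : ℂ) * Circle.exp (τ * δ) = Circle.exp (-(τ * y)) := by
    rw [← Circle.coe_mul, ← Circle.exp_add]
    ring_nf
  have term (n : ℤ) : K (τ - n) * Circle.exp (-(n * (y + δ))) * Circle.exp (τ * δ) =
      K (τ - n) * Circle.exp (-(n * y)) * (Circle.exp ((τ - n) * δ) : ℂ) := by
    rw [mul_assoc, mul_assoc, ← Circle.coe_mul, ← Circle.coe_mul, ← Circle.exp_add,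
      ← Circle.exp_add]
    ring_nf
  simpa only [term, total] using (h τ _ hy).mul_right (Circle.exp (τ * δ) : ℂ)

-- The sampling identity is averaged over the frequencies `y + a * u`, `u ∈ [-1, 1]`.
lemma IsSamplingKernel.mul_sinc {a : ℝ} (h : IsSamplingKernel K (Icc l r))
    (hK : ∀ τ, ‖K τ‖ ≤ C * (1 / (1 + τ ^ 2))) (ha : 0 ≤ a) :
    IsSamplingKernel (fun τ => K τ * (Real.sinc (a * τ) : ℂ)) (Icc (l + a) (r - a)) := by
  intro τ y hy
  have averaged : HasSum (fun n : ℤ => ∫ u in (-1 : ℝ)..1, K (τ - n) *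
      Circle.exp (-(n * y)) * Circle.exp ((τ - n) * (a * u)))
      (∫ _ in (-1 : ℝ)..1, (Circle.exp (-(τ * y)) : ℂ)) := by
    refine intervalIntegral.hasSum_integral_of_dominated_convergence
      (fun n _ => C * (1 / (1 + (τ - n) ^ 2))) (fun n => ?_) (fun n => .of_forall fun u _ => ?_)
      (.of_forall fun u _ => (summable_one_div_one_add_sub_sq τ).mul_left C)
      intervalIntegrable_const (.of_forall fun u hu => ?_)
    · exact Continuous.aestronglyMeasurable (by fun_prop)
    · simpa only [norm_mul, Circle.norm_coe, mul_one] using hK (τ - n)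
    · rw [uIoc_of_le (by norm_num)] at hu
      refine h.hasSum_shift τ ⟨?_, ?_⟩ <;> nlinarith [hy.1, hy.2, hu.1, hu.2]
  have term (n : ℤ) : (1 / 2 : ℂ) * ∫ u in (-1 : ℝ)..1, K (τ - n) * Circle.exp (-(n * y)) *
      Circle.exp ((τ - n) * (a * u)) =
        K (τ - n) * Real.sinc (a * (τ - n)) * Circle.exp (-(n * y)) := by
    simp only [mul_left_comm (τ - n), ← mul_assoc a]
    rw [intervalIntegral.integral_const_mul, integral_circleExp_mul]
    ring
  have total : (1 / 2 : ℂ) * ∫ _ in (-1 : ℝ)..1, (Circle.exp (-(τ * y)) : ℂ) =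
      Circle.exp (-(τ * y)) := by
    rw [intervalIntegral.integral_const, Complex.real_smul]
    push_cast
    ring
  simpa only [term, total] using averaged.mul_left (1 / 2 : ℂ)

lemma abs_prod_sinc_le_one {ι : Type*} (t : Finset ι) (b : ι → ℝ) :
    |∏ j ∈ t, Real.sinc (b j)| ≤ 1 := by
  rw [Finset.abs_prod]
  exact Finset.prod_le_one (fun _ _ => abs_nonneg _) fun _ _ => Real.abs_sinc_le_one _

lemma norm_mul_ofReal_le {z : ℂ} {B b : ℝ} (hz : ‖z‖ ≤ B) (hb : |b| ≤ 1) : ‖z * (b : ℂ)‖ ≤ B := by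
  rw [norm_mul, Complex.norm_real]
  exact (mul_le_of_le_one_right (norm_nonneg z) hb).trans hz

lemma IsSamplingKernel.mul_prod_sinc {ι : Type*} {a : ι → ℝ} (h : IsSamplingKernel K (Icc l r))
    (hK : ∀ τ, ‖K τ‖ ≤ C * (1 / (1 + τ ^ 2))) (ha : ∀ j, 0 ≤ a j) (t : Finset ι) :
    IsSamplingKernel (fun τ => K τ * (∏ j ∈ t, Real.sinc (a j * τ) : ℝ))
      (Icc (l + ∑ j ∈ t, a j) (r - ∑ j ∈ t, a j)) := by
  classical
  induction t using Finset.induction_on with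
  | empty => simpa using h
  | insert i t hi ih =>
    have hdecay : ∀ τ, ‖K τ * (∏ j ∈ t, Real.sinc (a j * τ) : ℝ)‖ ≤ C * (1 / (1 + τ ^ 2)) :=
      fun τ => norm_mul_ofReal_le (hK τ) (abs_prod_sinc_le_one t _)
    convert ih.mul_sinc hdecay (ha i) using 1
    · ext τ
      rw [Finset.prod_insert hi]
      push_cast
      ring
    · rw [Finset.sum_insert hi]
      ring_nf

lemma multipliable_sinc {ι : Type*} {b : ι → ℝ} (hb : Summable fun j => |b j|) :
    Multipliable fun j => Real.sinc (b j) := by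
  have h := Real.multipliable_one_add_of_summable
    (hb.of_norm_bounded fun j => abs_sinc_sub_one_le (b j))
  simpa using h

lemma abs_tprod_sinc_le_prod {ι : Type*} {b : ι → ℝ} (hb : Summable fun j => |b j|)
    (t : Finset ι) : |∏' j, Real.sinc (b j)| ≤ ∏ j ∈ t, |Real.sinc (b j)| := by
  classical
  refine le_of_tendsto ((multipliable_sinc hb).hasProd.norm) ?_
  filter_upwards [Filter.eventually_ge_atTop t] with t' ht'
  rw [← Finset.prod_sdiff ht']
  refine mul_le_of_le_one_left (Finset.prod_nonneg fun _ _ => abs_nonneg _) ?_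
  exact Finset.prod_le_one (fun _ _ => abs_nonneg _) fun _ _ => Real.abs_sinc_le_one _

lemma abs_tprod_sinc_le_one {ι : Type*} {b : ι → ℝ} (hb : Summable fun j => |b j|) :
    |∏' j, Real.sinc (b j)| ≤ 1 :=
  (abs_tprod_sinc_le_prod hb ∅).trans_eq Finset.prod_empty

lemma IsSamplingKernel.mul_tprod_sinc {ι : Type*} {a : ι → ℝ} (h : IsSamplingKernel K (Icc l r))
    (hK : ∀ τ, ‖K τ‖ ≤ C * (1 / (1 + τ ^ 2))) (ha : ∀ j, 0 ≤ a j) (ha' : Summable a) :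
    IsSamplingKernel (fun τ => K τ * (∏' j, Real.sinc (a j * τ) : ℝ))
      (Icc (l + ∑' j, a j) (r - ∑' j, a j)) := by
  intro τ y hy
  have hprod (σ : ℝ) : Summable fun j => |a j * σ| :=
    (ha'.mul_right σ).abs
  have hdecay : ∀ σ, ‖K σ * (∏' j, Real.sinc (a j * σ) : ℝ)‖ ≤ C * (1 / (1 + σ ^ 2)) := fun σ =>
    norm_mul_ofReal_le (hK σ) (abs_tprod_sinc_le_one (hprod σ))
  have finite_products (t : Finset ι) :
      ∑' n : ℤ, K (τ - n) * (∏ j ∈ t, Real.sinc (a j * (τ - n)) : ℝ) * Circle.exp (-(n * y)) =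
        (Circle.exp (-(τ * y)) : ℂ) := by
    have hle : ∑ j ∈ t, a j ≤ ∑' j, a j := ha'.sum_le_tsum t fun j _ => ha j
    exact (h.mul_prod_sinc hK ha t τ y ⟨by linarith [hy.1], by linarith [hy.2]⟩).tsum_eq
  have limit := tendsto_tsum_of_dominated_convergence (𝓕 := Filter.atTop)
    (f := fun (t : Finset ι) (n : ℤ) =>
      K (τ - n) * (∏ j ∈ t, Real.sinc (a j * (τ - n)) : ℝ) * (Circle.exp (-(n * y)) : ℂ))
    (g := fun n : ℤ => K (τ - n) * (∏' j, Real.sinc (a j * (τ - n)) : ℝ) * Circle.exp (-(n * y)))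
    ((summable_one_div_one_add_sub_sq τ).mul_left C)
    (fun n => (((Complex.continuous_ofReal.tendsto _).comp
      (multipliable_sinc (hprod (τ - n))).hasProd).const_mul _).mul_const _)
    (.of_forall fun t n => by
      rw [norm_mul, Circle.norm_coe, mul_one]
      exact norm_mul_ofReal_le (hK (τ - n)) (abs_prod_sinc_le_one t _))
  simp only [finite_products] at limit
  exact tendsto_nhds_unique limit tendsto_const_nhds ▸ (summable_mul_circleExp hdecay τ y).hasSum

end SincProducts

section StretchedExponentialKernel

lemma abs_sinc_le_exp_neg_one {t : ℝ} (ht : Real.exp 1 ≤ |t|) : |Real.sinc t| ≤ Real.exp (-1) := by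
  have h0 : t ≠ 0 := abs_pos.mp ((Real.exp_pos 1).trans_le ht)
  rw [Real.sinc_of_ne_zero h0, abs_div, Real.exp_neg, ← one_div]
  exact div_le_div₀ zero_le_one (Real.abs_sin_le_one t) (Real.exp_pos 1) ht

lemma abs_tprod_sinc_le_exp_neg {b : ℕ → ℝ} (hb : Summable fun j => |b j|) {n : ℕ}
    (hn : ∀ j < n, Real.exp 1 ≤ |b j|) : |∏' j, Real.sinc (b j)| ≤ Real.exp (-n) := by
  calc |∏' j, Real.sinc (b j)| ≤ ∏ j ∈ Finset.range n, |Real.sinc (b j)| :=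
        abs_tprod_sinc_le_prod hb _
    _ ≤ ∏ _j ∈ Finset.range n, Real.exp (-1) :=
        Finset.prod_le_prod (fun _ _ => abs_nonneg _)
          fun j hj => abs_sinc_le_exp_neg_one (hn j (Finset.mem_range.mp hj))
    _ = Real.exp (-n) := by
        rw [Finset.prod_const, Finset.card_range, ← Real.exp_nat_mul, mul_neg_one]

lemma exp_one_le_mul_rpow {s N m τ : ℝ} (hs : 0 < s) (hN : 0 ≤ N) (hm : 0 < m)
    (h : m ≤ N * |τ| ^ (1 / s)) : Real.exp 1 ≤ |Real.exp 1 * (N / m) ^ s * τ| := by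
  have key : 1 ≤ (N / m) ^ s * |τ| := calc
    1 ≤ (N / m * |τ| ^ (1 / s)) ^ s := by
        refine Real.one_le_rpow ?_ hs.le
        rwa [div_mul_eq_mul_div, one_le_div hm]
    _ = (N / m) ^ s * |τ| := by
        rw [Real.mul_rpow (by positivity) (by positivity), ← Real.rpow_mul (abs_nonneg τ),
          one_div_mul_cancel hs.ne', Real.rpow_one]
  rw [abs_mul, abs_of_nonneg (by positivity), mul_assoc]
  exact le_mul_of_one_le_right (Real.exp_pos 1).le key

lemma exists_abs_tprod_sinc_le {s N ε : ℝ} (hs : 1 < s) (hN : 0 ≤ N) (hε : 0 < ε) :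
    ∃ (a : ℕ → ℝ) (C : ℝ), (∀ j, 0 ≤ a j) ∧ Summable a ∧ ∑' j, a j ≤ ε ∧
      ∀ τ, |∏' j, Real.sinc (a j * τ)| ≤ C * Real.exp (-N * |τ| ^ (1 / s)) := by
  set w : ℕ → ℝ := fun j => Real.exp 1 * (N / (j + 1)) ^ s
  have hw : Summable w := by
    refine (((Real.summable_one_div_nat_add_rpow 1 s).mpr hs).mul_left
      (Real.exp 1 * N ^ s)).congr fun j => ?_
    have hj : (0 : ℝ) < j + 1 := by positivity
    simp only [w]
    rw [abs_of_pos hj, mul_one_div, mul_div_assoc, Real.div_rpow hN hj.le]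
  obtain ⟨J, hJ⟩ := ((tendsto_sum_nat_add w).eventually (ge_mem_nhds hε)).exists
  have ha : Summable fun j => w (j + J) := (summable_nat_add_iff J).mpr hw
  refine ⟨fun j => w (j + J), Real.exp (J + 1), fun j => by positivity, ha, hJ, fun τ => ?_⟩
  set x := N * |τ| ^ (1 / s)
  have hlarge : ∀ j < ⌊x⌋₊ - J, Real.exp 1 ≤ |w (j + J) * τ| := fun j hj => by
    refine exp_one_le_mul_rpow (by linarith) hN (by positivity) ?_
    calc ((j + J : ℕ) : ℝ) + 1 ≤ ⌊x⌋₊ := by exact_mod_cast (by omega : j + J + 1 ≤ ⌊x⌋₊)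
      _ ≤ x := Nat.floor_le (by positivity)
  refine (abs_tprod_sinc_le_exp_neg (ha.mul_right τ).abs hlarge).trans ?_
  rw [← Real.exp_add]
  refine Real.exp_le_exp.mpr ?_
  have hfloor : (⌊x⌋₊ : ℝ) ≤ (⌊x⌋₊ - J : ℕ) + J := by exact_mod_cast le_tsub_add
  linarith [Nat.lt_floor_add_one x]

lemma exists_isSamplingKernel_exp_decay {s N c : ℝ} (hs : 1 < s) (hN : 0 ≤ N) (hc0 : 0 ≤ c)
    (hc : c < 2 * Real.pi) : ∃ (K : ℝ → ℂ) (C B : ℝ), IsSamplingKernel K (Icc 0 c) ∧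
      (∀ τ, ‖K τ‖ ≤ C * (1 / (1 + τ ^ 2))) ∧ ∀ τ, ‖K τ‖ ≤ B * Real.exp (-N * |τ| ^ (1 / s)) := by
  obtain ⟨ε, hε, K, C, hKC, hK⟩ := exists_isSamplingKernel hc0 hc
  obtain ⟨a, B, ha0, ha, haε, hB⟩ := exists_abs_tprod_sinc_le hs hN hε
  have hprod (τ : ℝ) : Summable fun j => |a j * τ| := (ha.mul_right τ).abs
  refine ⟨fun τ => K τ * (∏' j, Real.sinc (a j * τ) : ℝ), C, C * B, fun τ y hy => ?_,
    fun τ => norm_mul_ofReal_le (hKC τ) (abs_tprod_sinc_le_one (hprod τ)), fun τ => ?_⟩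
  · exact hK.mul_tprod_sinc hKC ha0 ha τ y ⟨by linarith [hy.1], by linarith [hy.2]⟩
  · have hC : 0 ≤ C := by simpa using (norm_nonneg _).trans (hKC 0)
    have hKC' : ‖K τ‖ ≤ C := (hKC τ).trans <| mul_le_of_le_one_right hC <|
      (div_le_one (by positivity)).mpr (by linarith [sq_nonneg τ])
    rw [norm_mul, Complex.norm_real, Real.norm_eq_abs, mul_assoc]
    exact mul_le_mul hKC' (hB τ) (abs_nonneg _) hC

end StretchedExponentialKernel

section StretchedExp

variable {V W : Type*} [NormedAddCommGroup V] [NormedAddCommGroup W] {p a b : ℝ}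

lemma one_add_rpow_le {t : ℝ} (ht : 0 ≤ t) (hp : 0 ≤ p) : (1 + t) ^ p ≤ 2 ^ p * (1 + t ^ p) := by
  have hmax : 1 + t ≤ 2 * max 1 t := by linarith [le_max_left 1 t, le_max_right 1 t]
  calc (1 + t) ^ p ≤ (2 * max 1 t) ^ p := Real.rpow_le_rpow (by positivity) hmax hp
    _ = 2 ^ p * max 1 t ^ p := Real.mul_rpow zero_le_two (by positivity)
    _ ≤ 2 ^ p * (1 + t ^ p) := by
        gcongr
        rcases max_choice 1 t with h | h <;> rw [h]
        · rw [Real.one_rpow]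
          linarith [Real.rpow_nonneg ht p]
        · linarith

lemma exists_one_add_rpow_le_exp_rpow (hp : 0 < p) (r : ℝ) :
    ∃ C : ℝ, ∀ t : ℝ, 0 ≤ t → (1 + t) ^ r ≤ C * Real.exp (t ^ p) := by
  obtain ⟨m, hm⟩ := exists_nat_ge (r / p)
  refine ⟨(2 ^ p) ^ m * (m.factorial * Real.exp 1), fun t ht => ?_⟩
  calc (1 + t) ^ r ≤ (1 + t) ^ (p * m) :=
        Real.rpow_le_rpow_of_exponent_le (by linarith) ((div_le_iff₀' hp).mp hm)
    _ = ((1 + t) ^ p) ^ m := Real.rpow_mul_natCast (by linarith) p m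
    _ ≤ (2 ^ p * (1 + t ^ p)) ^ m := by gcongr; exact one_add_rpow_le ht hp.le
    _ = (2 ^ p) ^ m * (1 + t ^ p) ^ m := mul_pow _ _ _
    _ ≤ (2 ^ p) ^ m * (m.factorial * Real.exp (1 + t ^ p)) := by
        gcongr
        exact (div_le_iff₀' (by positivity)).mp
          (Real.pow_div_factorial_le_exp _ (by positivity) m)
    _ = (2 ^ p) ^ m * (m.factorial * Real.exp 1) * Real.exp (t ^ p) := by rw [Real.exp_add]; ring

/-- The stretched exponential `exp (-a ‖x‖ ^ p)`, the scale on which sampling kernels decay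
(`a > 0`) and admissible weights grow (`a < 0`, with `p = 1 / s`). -/
def stretchedExp (p a : ℝ) (x : V) : ℝ≥0∞ :=
  ENNReal.ofReal (Real.exp (-a * ‖x‖ ^ p))

lemma stretchedExp_add (x : V) :
    stretchedExp p (a + b) x = stretchedExp p a x * stretchedExp p b x := by
  simp only [stretchedExp]
  rw [← ENNReal.ofReal_mul (Real.exp_nonneg _), ← Real.exp_add]
  ring_nf

lemma stretchedExp_neg_arg (x : V) : stretchedExp p a (-x) = stretchedExp p a x := by
  simp only [stretchedExp, norm_neg]

lemma stretchedExp_le_one (ha : 0 ≤ a) (x : V) : stretchedExp p a x ≤ 1 := by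
  refine ENNReal.ofReal_le_one.mpr (Real.exp_le_one_iff.mpr ?_)
  rw [neg_mul, neg_nonpos]
  positivity

lemma stretchedExp_mul_rpow_le {R : ℝ} (hp : 0 ≤ p) (ha : 0 ≤ a) (hR : 0 ≤ R) {x : V} {y : W}
    (h : ‖y‖ ≤ R * ‖x‖) : stretchedExp p (a * R ^ p) x ≤ stretchedExp p a y := by
  refine ENNReal.ofReal_le_ofReal (Real.exp_le_exp.mpr ?_)
  rw [neg_mul, neg_mul, neg_le_neg_iff, mul_assoc, ← Real.mul_rpow hR (norm_nonneg x)]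
  gcongr

@[fun_prop]
lemma measurable_stretchedExp [MeasurableSpace V] [OpensMeasurableSpace V] :
    Measurable (stretchedExp p a : V → ℝ≥0∞) := by
  unfold stretchedExp
  fun_prop

lemma exists_stretchedExp_le_ofReal_one_add_norm_rpow (hp : 0 < p) (r : ℝ) :
    ∃ C : ℝ≥0, ∀ x : V, stretchedExp p 1 x ≤ C * ENNReal.ofReal ((1 + ‖x‖) ^ (-r)) := by
  obtain ⟨C, hC⟩ := exists_one_add_rpow_le_exp_rpow hp r
  refine ⟨C.toNNReal, fun x => ?_⟩
  change _ ≤ ENNReal.ofReal C * _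
  rw [← ENNReal.ofReal_mul' (by positivity)]
  refine ENNReal.ofReal_le_ofReal ?_
  rw [Real.rpow_neg (by positivity), neg_one_mul, Real.exp_neg, ← div_eq_mul_inv,
    le_div_iff₀ (by positivity), ← div_eq_inv_mul]
  exact (div_le_iff₀ (Real.exp_pos _)).mpr (hC ‖x‖ (norm_nonneg x))

lemma lintegral_stretchedExp_lt_top [NormedSpace ℝ V] [FiniteDimensional ℝ V] [MeasurableSpace V]
    [BorelSpace V] (μ : Measure V) [μ.IsAddHaarMeasure] (hp : 0 < p) :
    ∫⁻ x, stretchedExp p 1 x ∂μ < ∞ := by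
  set r : ℝ := Module.finrank ℝ V + 1
  obtain ⟨C, hC⟩ := exists_stretchedExp_le_ofReal_one_add_norm_rpow (V := V) hp r
  calc ∫⁻ x, stretchedExp p 1 x ∂μ ≤ ∫⁻ x, C * ENNReal.ofReal ((1 + ‖x‖) ^ (-r)) ∂μ :=
        lintegral_mono hC
    _ = C * ∫⁻ x, ENNReal.ofReal ((1 + ‖x‖) ^ (-r)) ∂μ :=
        lintegral_const_mul' _ _ ENNReal.coe_ne_top
    _ < ∞ := ENNReal.mul_lt_top ENNReal.coe_lt_top
        (finite_integral_one_add_norm (lt_add_one _))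

end StretchedExp

section PiSums

lemma hasSum_prod_pi {β R : Type*} [NormedCommRing R] [CompleteSpace R] {d : ℕ}
    {f : Fin d → β → R} {a : Fin d → R} (hf : ∀ i, HasSum (f i) (a i))
    (hf' : ∀ i, Summable fun n => ‖f i n‖) :
    HasSum (fun k : Fin d → β => ∏ i, f i (k i)) (∏ i, a i) ∧
      Summable fun k : Fin d → β => ‖∏ i, f i (k i)‖ := by
  induction d with
  | zero =>
    simp only [Finset.univ_eq_empty, Finset.prod_empty]
    exact ⟨hasSum_unique fun _ : Fin 0 → β => (1 : R),
      (hasSum_unique fun _ : Fin 0 → β => ‖(1 : R)‖).summable⟩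
  | succ d ih =>
    obtain ⟨htail, htail'⟩ := ih (fun i => hf i.succ) fun i => hf' i.succ
    have hcons : (fun k : Fin (d + 1) → β => ∏ i, f i (k i)) ∘ Fin.consEquiv (fun _ => β) =
        fun x : β × (Fin d → β) => f 0 x.1 * ∏ i, f (Fin.succ i) (x.2 i) := by
      ext x
      simp only [Function.comp_apply, Fin.prod_univ_succ, Fin.consEquiv, Equiv.coe_fn_mk,
        Fin.cons_zero, Fin.cons_succ]
    let g : (Fin d → β) → R := fun k => ∏ i, f (Fin.succ i) (k i)
    have hsum : Summable fun x : β × (Fin d → β) => f 0 x.1 * g x.2 :=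
      summable_mul_of_summable_norm (hf' 0) htail'
    constructor
    · rw [← (Fin.consEquiv fun _ => β).hasSum_iff, hcons, Fin.prod_univ_succ]
      exact HasSum.mul (g := g) (hf 0) htail hsum
    · rw [← (Fin.consEquiv fun _ => β).summable_iff]
      exact (Summable.mul_norm (g := g) (hf' 0) htail').congr
        fun x => congrArg norm (congrFun hcons x).symm

lemma norm_rpow_le_sum_abs_rpow {d : ℕ} {p : ℝ} (hp : 0 < p) (θ : Fin d → ℝ) :
    ‖θ‖ ^ p ≤ ∑ i, |θ i| ^ p := by
  have hsum : 0 ≤ ∑ i, |θ i| ^ p := Finset.sum_nonneg fun _ _ => by positivity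
  have hnorm : ‖θ‖ ≤ (∑ i, |θ i| ^ p) ^ p⁻¹ := by
    refine (pi_norm_le_iff_of_nonneg (by positivity)).mpr fun i => ?_
    rw [Real.le_rpow_inv_iff_of_pos (norm_nonneg _) hsum hp]
    exact Finset.single_le_sum (f := fun i => |θ i| ^ p) (fun _ _ => by positivity)
      (Finset.mem_univ i)
  rwa [Real.le_rpow_inv_iff_of_pos (norm_nonneg _) hsum hp] at hnorm

lemma prod_enorm_le_stretchedExp {d : ℕ} {K : ℝ → ℂ} {B N p : ℝ} (hp : 0 < p) (hN : 0 ≤ N)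
    (hK : ∀ τ, ‖K τ‖ ≤ B * Real.exp (-N * |τ| ^ p)) (θ : Fin d → ℝ) :
    ‖∏ i, K (θ i)‖ₑ ≤ ENNReal.ofReal B ^ d * stretchedExp p N θ := by
  have hB : 0 ≤ B := nonneg_of_mul_nonneg_left ((norm_nonneg _).trans (hK 0)) (Real.exp_pos _)
  rw [← ENNReal.ofReal_pow hB, stretchedExp, ← ENNReal.ofReal_mul (by positivity),
    ← ofReal_norm, norm_prod]
  refine ENNReal.ofReal_le_ofReal ?_
  calc ∏ i, ‖K (θ i)‖ ≤ ∏ i, B * Real.exp (-N * |θ i| ^ p) :=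
        Finset.prod_le_prod (fun _ _ => norm_nonneg _) fun i _ => hK (θ i)
    _ = B ^ d * Real.exp (-N * ∑ i, |θ i| ^ p) := by
        rw [Finset.prod_mul_distrib, Finset.prod_const, Finset.card_univ, Fintype.card_fin,
          ← Real.exp_sum, Finset.mul_sum]
    _ ≤ B ^ d * Real.exp (-N * ‖θ‖ ^ p) := by
        simp only [neg_mul]
        gcongr
        exact norm_rpow_le_sum_abs_rpow hp θ

end PiSums

section Lattices

variable {V : Type*} [NormedAddCommGroup V] [NormedSpace ℝ V]

/-- The point with integer coordinates `k` in the linear coordinate system `T`; as `k` varies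
these points form the lattice `T⁻¹(ℤ^d)`. -/
def latticePt (T : V ≃L[ℝ] (Fin d → ℝ)) (k : Fin d → ℤ) : V :=
  T.symm fun i => (k i : ℝ)

lemma apply_sub_latticePt (T : V ≃L[ℝ] (Fin d → ℝ)) (ξ : V) (k : Fin d → ℤ) (i : Fin d) :
    T (ξ - latticePt T k) i = T ξ i - k i := by
  rw [map_sub, latticePt, T.apply_symm_apply, Pi.sub_apply]

lemma one_add_norm_rpow_le_prod (T : V →L[ℝ] (Fin d → ℝ)) (x : V) :
    (1 + ‖x‖) ^ (-(2 * d : ℕ) : ℝ) ≤ (1 + ‖T‖) ^ (2 * d) * ∏ i, 1 / (1 + T x i ^ 2) := by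
  have factor (i : Fin d) : 1 + T x i ^ 2 ≤ ((1 + ‖T‖) * (1 + ‖x‖)) ^ 2 := by
    have hi : |T x i| ≤ ‖T‖ * ‖x‖ := (norm_le_pi_norm (T x) i).trans (T.le_opNorm x)
    have hsq : T x i ^ 2 ≤ (‖T‖ * ‖x‖) ^ 2 := sq_le_sq.mpr (hi.trans (le_abs_self _))
    nlinarith [norm_nonneg T, norm_nonneg x, mul_nonneg (norm_nonneg T) (norm_nonneg x)]
  have product : ∏ i, (1 + T x i ^ 2) ≤ (1 + ‖T‖) ^ (2 * d) * (1 + ‖x‖) ^ (2 * d) := calc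
    ∏ i, (1 + T x i ^ 2) ≤ ∏ _i : Fin d, ((1 + ‖T‖) * (1 + ‖x‖)) ^ 2 :=
      Finset.prod_le_prod (fun _ _ => by positivity) fun i _ => factor i
    _ = (1 + ‖T‖) ^ (2 * d) * (1 + ‖x‖) ^ (2 * d) := by
      rw [Finset.prod_const, Finset.card_univ, Fintype.card_fin, ← pow_mul, mul_pow]
  rw [Real.rpow_neg (by positivity), Real.rpow_natCast, Finset.prod_div_distrib,
    Finset.prod_const_one, mul_one_div, inv_eq_one_div,
    div_le_div_iff₀ (by positivity) (Finset.prod_pos fun _ _ => by positivity), one_mul]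
  exact product

lemma tsum_ofReal_prod_le (θ : Fin d → ℝ) :
    ∑' k : Fin d → ℤ, ENNReal.ofReal (∏ i, 1 / (1 + (θ i - k i) ^ 2)) ≤
      ENNReal.ofReal ((3 * ∑' n : ℤ, 1 / (1 + (n : ℝ) ^ 2)) ^ d) := by
  have hsum := (hasSum_prod_pi (fun i => (summable_one_div_one_add_sub_sq (θ i)).hasSum)
    fun i => (summable_one_div_one_add_sub_sq (θ i)).norm).1
  rw [← ENNReal.ofReal_tsum_of_nonneg
    (fun k => Finset.prod_nonneg fun _ _ => by positivity) hsum.summable, hsum.tsum_eq]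
  refine ENNReal.ofReal_le_ofReal ?_
  calc ∏ i, ∑' n : ℤ, 1 / (1 + (θ i - n) ^ 2)
      ≤ ∏ _i : Fin d, 3 * ∑' n : ℤ, 1 / (1 + (n : ℝ) ^ 2) :=
        Finset.prod_le_prod (fun _ _ => tsum_nonneg fun _ => by positivity)
          fun i _ => tsum_one_div_one_add_sub_sq_le (θ i)
    _ = (3 * ∑' n : ℤ, 1 / (1 + (n : ℝ) ^ 2)) ^ d := Fin.prod_const d _

lemma exists_tsum_stretchedExp_sub_latticePt_le (T : V ≃L[ℝ] (Fin d → ℝ)) {p : ℝ} (hp : 0 < p) :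
    ∃ M : ℝ≥0, ∀ ξ, ∑' k, stretchedExp p 1 (ξ - latticePt T k) ≤ M := by
  obtain ⟨C, hC⟩ := exists_stretchedExp_le_ofReal_one_add_norm_rpow (V := V) hp (2 * d : ℕ)
  let A : ℝ := (1 + ‖(T : V →L[ℝ] (Fin d → ℝ))‖) ^ (2 * d)
  have hA : 0 ≤ A := by positivity
  refine ⟨C * A.toNNReal * ((3 * ∑' n : ℤ, 1 / (1 + (n : ℝ) ^ 2)) ^ d).toNNReal, fun ξ => ?_⟩
  have term (k : Fin d → ℤ) : stretchedExp p 1 (ξ - latticePt T k) ≤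
      C * ENNReal.ofReal A * ENNReal.ofReal (∏ i, 1 / (1 + (T ξ i - k i) ^ 2)) := by
    refine (hC _).trans ?_
    rw [mul_assoc, ← ENNReal.ofReal_mul hA]
    gcongr
    simpa only [ContinuousLinearEquiv.coe_coe, apply_sub_latticePt] using
      one_add_norm_rpow_le_prod (T : V →L[ℝ] (Fin d → ℝ)) (ξ - latticePt T k)
  calc ∑' k, stretchedExp p 1 (ξ - latticePt T k)
      ≤ ∑' k : Fin d → ℤ,
          C * ENNReal.ofReal A * ENNReal.ofReal (∏ i, 1 / (1 + (T ξ i - k i) ^ 2)) :=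
        ENNReal.tsum_le_tsum term
    _ = C * ENNReal.ofReal A *
          ∑' k : Fin d → ℤ, ENNReal.ofReal (∏ i, 1 / (1 + (T ξ i - k i) ^ 2)) :=
        ENNReal.tsum_mul_left
    _ ≤ C * ENNReal.ofReal A * ENNReal.ofReal ((3 * ∑' n : ℤ, 1 / (1 + (n : ℝ) ^ 2)) ^ d) := by
        gcongr
        exact tsum_ofReal_prod_le (T ξ)

end Lattices

section DualBoxes

variable {V : Type*} [NormedAddCommGroup V] [InnerProductSpace ℝ V]

/-- The points `x` for which `x - x₁` has coordinates in `J` with respect to the basis dual to the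
coordinate functionals `ξ ↦ T ξ i`. -/
def dualBox (T : V ≃L[ℝ] (Fin d → ℝ)) (x₁ : V) (J : Set ℝ) : Set V :=
  {x | ∃ y : Fin d → ℝ, (∀ i, y i ∈ J) ∧ ∀ ξ, ⟪x, ξ⟫ = ⟪x₁, ξ⟫ + ∑ i, T ξ i * y i}

/-- The coordinates `ξ ↦ c⁻¹ Aᵀ ξ`, in which the dual lattice `c (Aᵀ)⁻¹(ℤ^d)` becomes `ℤ^d`. -/
def latticeCoord (A : Matrix (Fin d) (Fin d) ℝ) (hA : IsUnit A.det) {c : ℝ} (hc : c ≠ 0) :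
    EuclideanSpace ℝ (Fin d) ≃L[ℝ] (Fin d → ℝ) :=
  have hAt : IsUnit A.transpose.det := A.det_transpose.symm ▸ hA
  (EuclideanSpace.equiv (Fin d) ℝ).trans
    (Matrix.toLin'OfInv (M := c • A.transpose⁻¹) (M' := c⁻¹ • A.transpose)
      (by rw [smul_mul_smul_comm, mul_inv_cancel₀ hc, Matrix.nonsing_inv_mul _ hAt, one_smul])
      (by rw [smul_mul_smul_comm, inv_mul_cancel₀ hc, Matrix.mul_nonsing_inv _ hAt, one_smul])
      ).toContinuousLinearEquiv

variable (A : Matrix (Fin d) (Fin d) ℝ) (hA : IsUnit A.det) {c : ℝ}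

lemma latticePt_latticeCoord (hc : c ≠ 0) (k : Fin d → ℤ) :
    latticePt (latticeCoord A hA hc) k = dualLatPt A c k :=
  congrArg toE (Matrix.smul_mulVec c A.transpose⁻¹ fun i => (k i : ℝ))

lemma inner_toE_mulVec (t : Fin d → ℝ) (ξ : EuclideanSpace ℝ (Fin d)) :
    ⟪toE (A.mulVec t), ξ⟫ = ∑ i, A.transpose.mulVec ξ i * t i := by
  rw [EuclideanSpace.inner_eq_star_dotProduct, star_trivial]
  change ξ ⬝ᵥ A.mulVec t = _
  rw [Matrix.dotProduct_mulVec, ← Matrix.mulVec_transpose, dotProduct]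

lemma lattPara_subset_dualBox (hc : 0 < c) (x₁ : EuclideanSpace ℝ (Fin d)) :
    lattPara A x₁ ⊆ dualBox (latticeCoord A hA hc.ne') x₁ (Icc 0 c) := by
  rintro _ ⟨t, ht, rfl⟩
  refine ⟨c • t, fun i => ?_, fun ξ => ?_⟩
  · obtain ⟨ht₀, ht₁⟩ := ht i (mem_univ i)
    exact ⟨mul_nonneg hc.le ht₀, mul_le_of_le_one_right hc.le ht₁⟩
  · rw [inner_add_left, inner_toE_mulVec]
    refine congrArg _ (Finset.sum_congr rfl fun i _ => ?_)
    change _ = ((c⁻¹ • A.transpose).mulVec ξ) i * (c * t i)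
    rw [Matrix.smul_mulVec, Pi.smul_apply, smul_eq_mul]
    field_simp

end DualBoxes

section SamplingFormula

variable {K : ℝ → ℂ} {C : ℝ} {J : Set ℝ}

lemma coe_circleExp_neg_sum (a : Fin d → ℝ) :
    (Circle.exp (-∑ i, a i) : ℂ) = ∏ i, (Circle.exp (-a i) : ℂ) := by
  simp only [Circle.coe_exp]
  rw [← Complex.exp_sum, ← Finset.sum_mul, ← Finset.sum_neg_distrib, Complex.ofReal_sum]

lemma summable_norm_prod_sub (hK : ∀ τ, ‖K τ‖ ≤ C * (1 / (1 + τ ^ 2))) (θ : Fin d → ℝ) :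
    Summable fun k : Fin d → ℤ => ‖∏ i, K (θ i - k i)‖ := by
  have hline (i : Fin d) : Summable fun n : ℤ => ‖K (θ i - n)‖ :=
    .of_nonneg_of_le (fun _ => norm_nonneg _) (fun n => hK (θ i - n))
      ((summable_one_div_one_add_sub_sq (θ i)).mul_left C)
  exact (hasSum_prod_pi (fun i => (hline i).of_norm.hasSum) hline).2

lemma IsSamplingKernel.hasSum_prod (h : IsSamplingKernel K J)
    (hK : ∀ τ, ‖K τ‖ ≤ C * (1 / (1 + τ ^ 2))) (θ : Fin d → ℝ) {y : Fin d → ℝ}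
    (hy : ∀ i, y i ∈ J) :
    HasSum (fun k : Fin d → ℤ => (∏ i, K (θ i - k i)) * Circle.exp (-∑ i, k i * y i))
      (Circle.exp (-∑ i, θ i * y i) : ℂ) := by
  simp only [coe_circleExp_neg_sum, ← Finset.prod_mul_distrib]
  exact (hasSum_prod_pi (fun i => h (θ i) (y i) (hy i))
    fun i => (summable_mul_circleExp hK (θ i) (y i)).norm).1

section Coefficients

variable {V : Type*} [NormedAddCommGroup V] [InnerProductSpace ℝ V]
  {T : V ≃L[ℝ] (Fin d → ℝ)} {x₁ x : V}

/-- The weight of the sample at `latticePt T k` when the product kernel built from `K` reconstructs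
at `ξ` the transform of a function supported in a box with corner `x₁`. -/
def sampleCoeff (K : ℝ → ℂ) (T : V ≃L[ℝ] (Fin d → ℝ)) (x₁ ξ : V) (k : Fin d → ℤ) : ℂ :=
  (∏ i, K (T ξ i - k i)) * Circle.exp (-⟪x₁, ξ - latticePt T k⟫)

lemma norm_sampleCoeff (ξ : V) (k : Fin d → ℤ) :
    ‖sampleCoeff K T x₁ ξ k‖ = ‖∏ i, K (T ξ i - k i)‖ := by
  rw [sampleCoeff, norm_mul, Circle.norm_coe, mul_one]

lemma summable_norm_sampleCoeff (hK : ∀ τ, ‖K τ‖ ≤ C * (1 / (1 + τ ^ 2))) (ξ : V) :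
    Summable fun k => ‖sampleCoeff K T x₁ ξ k‖ := by
  simpa only [norm_sampleCoeff] using summable_norm_prod_sub hK (T ξ)

lemma IsSamplingKernel.hasSum_sampleCoeff_mul_circleExp (h : IsSamplingKernel K J)
    (hK : ∀ τ, ‖K τ‖ ≤ C * (1 / (1 + τ ^ 2))) (hx : x ∈ dualBox T x₁ J) (ξ : V) :
    HasSum (fun k => sampleCoeff K T x₁ ξ k * Circle.exp (-⟪x, latticePt T k⟫))
      (Circle.exp (-⟪x, ξ⟫) : ℂ) := by
  obtain ⟨y, hy, hxy⟩ := hx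
  have total : (Circle.exp (-∑ i, T ξ i * y i) : ℂ) * Circle.exp (-⟪x₁, ξ⟫) =
      Circle.exp (-⟪x, ξ⟫) := by
    rw [← Circle.coe_mul, ← Circle.exp_add, hxy]
    ring_nf
  have term (k : Fin d → ℤ) :
      (∏ i, K (T ξ i - k i)) * Circle.exp (-∑ i, k i * y i) * Circle.exp (-⟪x₁, ξ⟫) =
        sampleCoeff K T x₁ ξ k * (Circle.exp (-⟪x, latticePt T k⟫) : ℂ) := by
    have hcoord : T (latticePt T k) = fun i => (k i : ℝ) := T.apply_symm_apply _
    rw [sampleCoeff, mul_assoc, mul_assoc, ← Circle.coe_mul, ← Circle.coe_mul, ← Circle.exp_add,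
      ← Circle.exp_add, hxy, inner_sub_right, hcoord]
    ring_nf
  simpa only [term, total] using (h.hasSum_prod hK (T ξ) hy).mul_right (Circle.exp (-⟪x₁, ξ⟫) : ℂ)

lemma enorm_sampleCoeff_le {p L B : ℝ} (hp : 0 < p) (hL : 0 ≤ L)
    (hK : ∀ τ, ‖K τ‖ ≤ B * Real.exp (-(L * ‖(T.symm : (Fin d → ℝ) →L[ℝ] V)‖ ^ p) * |τ| ^ p)) (ξ : V)
    (k : Fin d → ℤ) :
    ‖sampleCoeff K T x₁ ξ k‖ₑ ≤
      ENNReal.ofReal B ^ d * stretchedExp p L (ξ - latticePt T k) := by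
  have hle : ‖ξ - latticePt T k‖ ≤
      ‖(T.symm : (Fin d → ℝ) →L[ℝ] V)‖ * ‖T (ξ - latticePt T k)‖ := by
    simpa using (T.symm : (Fin d → ℝ) →L[ℝ] V).le_opNorm (T (ξ - latticePt T k))
  rw [← ofReal_norm, norm_sampleCoeff, ofReal_norm]
  simp only [← apply_sub_latticePt]
  refine (prod_enorm_le_stretchedExp hp (by positivity) hK _).trans ?_
  gcongr
  exact stretchedExp_mul_rpow_le hp.le hL (norm_nonneg _) hle

end Coefficients

variable {f : EuclideanSpace ℝ (Fin d) → ℂ} {T : EuclideanSpace ℝ (Fin d) ≃L[ℝ] (Fin d → ℝ)}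
  {x₁ : EuclideanSpace ℝ (Fin d)}

lemma FT_eq_integral_circleExp (f : EuclideanSpace ℝ (Fin d) → ℂ)
    (ξ : EuclideanSpace ℝ (Fin d)) : FT f ξ =
      ((2 * Real.pi) ^ (-(d : ℝ) / 2) : ℝ) * ∫ x, f x * Circle.exp (-⟪x, ξ⟫) := by
  simp only [FT, Circle.coe_exp, Complex.ofReal_neg]

lemma norm_FT_le (f : EuclideanSpace ℝ (Fin d) → ℂ) (ξ : EuclideanSpace ℝ (Fin d)) :
    ‖FT f ξ‖ ≤ (2 * Real.pi) ^ (-(d : ℝ) / 2) * ∫ x, ‖f x‖ := by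
  rw [FT_eq_integral_circleExp, norm_mul, Complex.norm_real,
    Real.norm_of_nonneg (by positivity)]
  gcongr
  simpa only [norm_mul, Circle.norm_coe, mul_one] using
    norm_integral_le_integral_norm fun x => f x * (Circle.exp (-⟪x, ξ⟫) : ℂ)

lemma integrable_mul_circleExp_inner (hf : Integrable f) (ξ : EuclideanSpace ℝ (Fin d)) :
    Integrable fun x => f x * (Circle.exp (-⟪x, ξ⟫) : ℂ) :=
  hf.mul_bdd (c := 1) (Continuous.aestronglyMeasurable (by fun_prop))
    (.of_forall fun _ => (Circle.norm_coe _).le)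

lemma IsSamplingKernel.hasSum_FT (h : IsSamplingKernel K J)
    (hK : ∀ τ, ‖K τ‖ ≤ C * (1 / (1 + τ ^ 2))) (hf : Integrable f)
    (hsupp : Function.support f ⊆ dualBox T x₁ J) (ξ : EuclideanSpace ℝ (Fin d)) :
    HasSum (fun k => sampleCoeff K T x₁ ξ k * FT f (latticePt T k)) (FT f ξ) := by
  let F : (Fin d → ℤ) → EuclideanSpace ℝ (Fin d) → ℂ := fun k x =>
    sampleCoeff K T x₁ ξ k * (f x * Circle.exp (-⟪x, latticePt T k⟫))
  have hF (k : Fin d → ℤ) : Integrable (F k) :=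
    (integrable_mul_circleExp_inner hf (latticePt T k)).const_mul _
  have pointwise (x : EuclideanSpace ℝ (Fin d)) :
      ∑' k, F k x = f x * (Circle.exp (-⟪x, ξ⟫) : ℂ) := by
    by_cases hx : f x = 0
    · simp only [F, hx, zero_mul, mul_zero, tsum_zero]
    · simpa only [F, mul_left_comm] using
        ((h.hasSum_sampleCoeff_mul_circleExp hK (hsupp hx) ξ).mul_left (f x)).tsum_eq
  have hnorm : Summable fun k => ∫ x, ‖F k x‖ := by
    simp only [F, norm_mul, Circle.norm_coe, mul_one, integral_const_mul]
    exact (summable_norm_sampleCoeff hK ξ).mul_right _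
  have integrated := hasSum_integral_of_summable_integral_norm hF hnorm
  have term (k : Fin d → ℤ) : (((2 * Real.pi) ^ (-(d : ℝ) / 2) : ℝ) : ℂ) * ∫ x, F k x =
      sampleCoeff K T x₁ ξ k * FT f (latticePt T k) := by
    rw [FT_eq_integral_circleExp, integral_const_mul, mul_left_comm]
  simpa only [term, pointwise, ← FT_eq_integral_circleExp] using
    integrated.mul_left (((2 * Real.pi) ^ (-(d : ℝ) / 2) : ℝ) : ℂ)

lemma exists_enorm_FT_le_tsum {c s L : ℝ} (hc0 : 0 ≤ c) (hc : c < 2 * Real.pi) (hs : 1 < s)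
    (hL : 0 ≤ L) (hf : Integrable f) (hsupp : Function.support f ⊆ dualBox T x₁ (Icc 0 c)) :
    ∃ C : ℝ≥0, ∀ ξ, ‖FT f ξ‖ₑ ≤
      C * ∑' k, stretchedExp (1 / s) L (ξ - latticePt T k) * ‖FT f (latticePt T k)‖ₑ := by
  obtain ⟨K, C, B, hK, hKC, hKB⟩ := exists_isSamplingKernel_exp_decay (s := s)
    (N := L * ‖(T.symm : (Fin d → ℝ) →L[ℝ] EuclideanSpace ℝ (Fin d))‖ ^ (1 / s)) hs
    (by positivity) hc0 hc
  refine ⟨B.toNNReal ^ d, fun ξ => ?_⟩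
  rw [← (hK.hasSum_FT hKC hf hsupp ξ).tsum_eq, ← ENNReal.tsum_mul_left]
  refine enorm_tsum_le_tsum_enorm.trans (ENNReal.tsum_le_tsum fun k => ?_)
  rw [enorm_mul, ← mul_assoc, ENNReal.coe_pow]
  gcongr
  exact enorm_sampleCoeff_le (by positivity) hL hKB ξ k

end SamplingFormula

section WeightedTransforms

variable {s : ℝ} {ω : EuclideanSpace ℝ (Fin d) → ℝ} {f : EuclideanSpace ℝ (Fin d) → ℂ}

lemma IsSAdmissible.exists_ofReal_le (hω : IsSAdmissible s ω) :
    ∃ (C : ℝ≥0) (a : ℝ), 0 ≤ a ∧ ∀ x y, ENNReal.ofReal (ω x) ≤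
      C * stretchedExp (1 / s) (-a) (x - y) * ENNReal.ofReal (ω y) := by
  obtain ⟨-, hω, v, -, -, -, -, C₀, a, C₁, hC₀, ha, hC₁, hv, hmod⟩ := hω
  refine ⟨(C₁ * C₀).toNNReal, a, ha.le, fun x y => ?_⟩
  change _ ≤ ENNReal.ofReal (C₁ * C₀) * _ * _
  rw [stretchedExp, neg_neg, ← ENNReal.ofReal_mul (by positivity),
    ← ENNReal.ofReal_mul (by positivity)]
  refine ENNReal.ofReal_le_ofReal ?_
  calc ω x = ω (x - y + y) := by rw [sub_add_cancel]
    _ ≤ C₁ * v (x - y) * ω y := hmod _ _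
    _ ≤ C₁ * (C₀ * Real.exp (a * ‖x - y‖ ^ (1 / s))) * ω y := by
        gcongr
        · exact (hω y).le
        · exact hv _
    _ = C₁ * C₀ * Real.exp (a * ‖x - y‖ ^ (1 / s)) * ω y := by ring

/-- The weighted modulus `|f̂| ω`, with values in `[0, ∞]`. -/
def weightedFT (ω : EuclideanSpace ℝ (Fin d) → ℝ) (f : EuclideanSpace ℝ (Fin d) → ℂ)
    (ξ : EuclideanSpace ℝ (Fin d)) : ℝ≥0∞ :=
  ‖FT f ξ‖ₑ * ENNReal.ofReal (ω ξ)

lemma ofReal_norm_FT_mul_rpow {q : ℝ} (hq : 0 ≤ q) {ξ : EuclideanSpace ℝ (Fin d)}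
    (hω : 0 ≤ ω ξ) : ENNReal.ofReal ((‖FT f ξ‖ * ω ξ) ^ q) = weightedFT ω f ξ ^ q := by
  rw [← ENNReal.ofReal_rpow_of_nonneg (mul_nonneg (norm_nonneg _) hω) hq,
    ENNReal.ofReal_mul (norm_nonneg _), ofReal_norm, weightedFT]

lemma exists_weightedFT_le_stretchedExp (hω : IsSAdmissible s ω)
    (f : EuclideanSpace ℝ (Fin d) → ℂ) : ∃ (B : ℝ≥0) (a : ℝ), 0 ≤ a ∧
      ∀ ξ, weightedFT ω f ξ ≤ B * stretchedExp (1 / s) (-a) ξ := by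
  obtain ⟨C, a, ha, hC⟩ := hω.exists_ofReal_le
  let F : ℝ := (2 * Real.pi) ^ (-(d : ℝ) / 2) * ∫ x, ‖f x‖
  have hF (ξ : EuclideanSpace ℝ (Fin d)) : ‖FT f ξ‖ₑ ≤ F.toNNReal := by
    rw [← ofReal_norm]
    exact ENNReal.ofReal_le_ofReal (norm_FT_le f ξ)
  refine ⟨F.toNNReal * C * (ω 0).toNNReal, a, ha, fun ξ => ?_⟩
  calc weightedFT ω f ξ
      ≤ F.toNNReal * (C * stretchedExp (1 / s) (-a) (ξ - 0) * ENNReal.ofReal (ω 0)) :=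
        mul_le_mul' (hF ξ) (hC ξ 0)
    _ = (F.toNNReal * C * (ω 0).toNNReal : ℝ≥0) * stretchedExp (1 / s) (-a) ξ := by
        rw [sub_zero, ENNReal.ofReal]
        push_cast
        ring

lemma exists_weightedFT_le_tsum {T : EuclideanSpace ℝ (Fin d) ≃L[ℝ] (Fin d → ℝ)}
    {x₁ : EuclideanSpace ℝ (Fin d)} {c L : ℝ} (hω : IsSAdmissible s ω) (hc0 : 0 ≤ c)
    (hc : c < 2 * Real.pi) (hs : 1 < s) (hL : 0 ≤ L) (hf : Integrable f)
    (hsupp : Function.support f ⊆ dualBox T x₁ (Icc 0 c)) :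
    ∃ C : ℝ≥0, ∀ ξ, weightedFT ω f ξ ≤
      C * ∑' k, stretchedExp (1 / s) L (ξ - latticePt T k) * weightedFT ω f (latticePt T k) := by
  obtain ⟨Cω, a, ha, hCω⟩ := hω.exists_ofReal_le
  obtain ⟨C, hC⟩ := exists_enorm_FT_le_tsum hc0 hc hs (add_nonneg hL ha) hf hsupp
  refine ⟨C * Cω, fun ξ => ?_⟩
  refine (mul_le_mul_left (hC ξ) _).trans ?_
  rw [← ENNReal.tsum_mul_left, ← ENNReal.tsum_mul_right, ← ENNReal.tsum_mul_left]
  refine ENNReal.tsum_le_tsum fun k => ?_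
  set l := latticePt T k
  calc C * (stretchedExp (1 / s) (L + a) (ξ - l) * ‖FT f l‖ₑ) * ENNReal.ofReal (ω ξ)
      ≤ C * (stretchedExp (1 / s) (L + a) (ξ - l) * ‖FT f l‖ₑ) *
          (Cω * stretchedExp (1 / s) (-a) (ξ - l) * ENNReal.ofReal (ω l)) := by
        gcongr
        exact hCω ξ l
    _ = C * Cω * (stretchedExp (1 / s) (L + a) (ξ - l) * stretchedExp (1 / s) (-a) (ξ - l) *
          (‖FT f l‖ₑ * ENNReal.ofReal (ω l))) := by ring
    _ = (C * Cω : ℝ≥0) * (stretchedExp (1 / s) L (ξ - l) * weightedFT ω f l) := by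
        rw [← stretchedExp_add, add_neg_cancel_right, ENNReal.coe_mul, weightedFT]

end WeightedTransforms

section Cones

variable {Γ₀ Γ : Set (EuclideanSpace ℝ (Fin d))}

lemma exists_mul_norm_le_norm_sub (h₀ : IsCone Γ₀) (hΓ : IsCone Γ) (hΓo : IsOpen Γ)
    (hsub : closure Γ₀ \ {0} ⊆ Γ) :
    ∃ δ > 0, ∀ ξ ∈ Γ₀, ∀ l ∉ Γ, δ * ‖ξ‖ ≤ ‖ξ - l‖ := by
  have hcompact : IsCompact (closure Γ₀ ∩ Metric.sphere 0 1) :=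
    (isCompact_sphere 0 1).inter_left isClosed_closure
  have hsphere : closure Γ₀ ∩ Metric.sphere 0 1 ⊆ Γ := fun x hx =>
    hsub ⟨hx.1, ne_zero_of_mem_unit_sphere ⟨x, hx.2⟩⟩
  obtain ⟨δ, hδ, hthick⟩ := hcompact.exists_thickening_subset_open hΓo hsphere
  refine ⟨δ, hδ, fun ξ hξ l hl => ?_⟩
  have hξ0 : ξ ≠ 0 := fun h => h₀.1 (h ▸ hξ)
  have hξpos : 0 < ‖ξ‖ := norm_pos_iff.mpr hξ0
  have hunit : ‖ξ‖⁻¹ • ξ ∈ closure Γ₀ ∩ Metric.sphere 0 1 :=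
    ⟨subset_closure (h₀.2 ξ hξ _ (inv_pos.mpr hξpos)),
      mem_sphere_zero_iff_norm.mpr (norm_smul_inv_norm hξ0)⟩
  by_contra! hlt
  refine hl ?_
  have hmem : ‖ξ‖⁻¹ • l ∈ Γ := by
    refine hthick (Metric.mem_thickening_iff.mpr ⟨_, hunit, ?_⟩)
    rwa [dist_comm, dist_eq_norm, ← smul_sub, norm_smul, norm_inv, norm_norm,
      inv_mul_lt_iff₀ hξpos, mul_comm]
  simpa only [smul_inv_smul₀ hξpos.ne'] using hΓ.2 _ hmem ‖ξ‖ hξpos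

lemma exists_norm_le_mul_norm_sub (h₀ : IsCone Γ₀) (hΓ : IsCone Γ) (hΓo : IsOpen Γ)
    (hsub : closure Γ₀ \ {0} ⊆ Γ) :
    ∃ R : ℝ, 0 ≤ R ∧ ∀ ξ ∈ Γ₀, ∀ l ∉ Γ, ‖l‖ ≤ R * ‖ξ - l‖ := by
  obtain ⟨δ, hδ, h⟩ := exists_mul_norm_le_norm_sub h₀ hΓ hΓo hsub
  refine ⟨δ⁻¹ + 1, by positivity, fun ξ hξ l hl => ?_⟩
  calc ‖l‖ ≤ ‖ξ‖ + ‖ξ - l‖ := norm_le_norm_add_norm_sub ξ l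
    _ ≤ δ⁻¹ * ‖ξ - l‖ + ‖ξ - l‖ := by
        gcongr
        exact (le_inv_mul_iff₀ hδ).mpr (h ξ hξ l hl)
    _ = (δ⁻¹ + 1) * ‖ξ - l‖ := by ring

lemma stretchedExp_mul_le_indicator_add {V : Type*} [NormedAddCommGroup V] {S : Set V}
    {g : V → ℝ≥0∞} {B : ℝ≥0∞} {p a R : ℝ} (hp : 0 ≤ p) (ha : 0 ≤ a) (hR : 0 ≤ R) {x y : V}
    (hg : g y ≤ B * stretchedExp p (-a) y) (hxy : y ∉ S → ‖y‖ ≤ R * ‖x - y‖) :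
    stretchedExp p (1 + (1 + a) * R ^ p) (x - y) * g y ≤
      stretchedExp p 1 (x - y) * (S.indicator g y + B * stretchedExp p 1 y) := by
  rw [stretchedExp_add, mul_assoc]
  gcongr
  by_cases hy : y ∈ S
  · rw [indicator_of_mem hy]
    exact (mul_le_of_le_one_left' (stretchedExp_le_one (by positivity) _)).trans le_self_add
  · rw [indicator_of_notMem hy, zero_add]
    calc stretchedExp p ((1 + a) * R ^ p) (x - y) * g y
        ≤ stretchedExp p (1 + a) y * (B * stretchedExp p (-a) y) := by
          gcongr
          exact stretchedExp_mul_rpow_le hp (by positivity) hR (hxy hy)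
      _ = B * stretchedExp p 1 y := by
          rw [mul_left_comm, ← stretchedExp_add, add_neg_cancel_right]

end Cones

section SchurTest

variable {ι : Type*} {q : ℝ}

lemma rpow_tsum_mul_le (hq : 1 ≤ q) (w b : ι → ℝ≥0∞) :
    (∑' i, w i * b i) ^ q ≤ (∑' i, w i) ^ (q - 1) * ∑' i, w i * b i ^ q := by
  have hq0 : 0 < q := zero_lt_one.trans_le hq
  have hconj : 0 ≤ 1 - q⁻¹ := sub_nonneg.mpr (inv_le_one_of_one_le₀ hq)
  have holder : ∑' i, w i * b i ≤ (∑' i, w i) ^ (1 - q⁻¹) * (∑' i, w i * b i ^ q) ^ q⁻¹ := by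
    refine ENNReal.summable.tsum_le_of_sum_le fun t =>
      (ENNReal.inner_le_weight_mul_Lp_of_nonneg t hq w b).trans ?_
    gcongr <;> exact ENNReal.sum_le_tsum t
  calc (∑' i, w i * b i) ^ q
      ≤ ((∑' i, w i) ^ (1 - q⁻¹) * (∑' i, w i * b i ^ q) ^ q⁻¹) ^ q := by gcongr
    _ = (∑' i, w i) ^ (q - 1) * ∑' i, w i * b i ^ q := by
        rw [ENNReal.mul_rpow_of_nonneg _ _ hq0.le, ← ENNReal.rpow_mul, ← ENNReal.rpow_mul,
          inv_mul_cancel₀ hq0.ne', ENNReal.rpow_one, sub_mul, one_mul, inv_mul_cancel₀ hq0.ne']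

lemma lintegral_rpow_tsum_mul_le [Countable ι] {α : Type*} [MeasurableSpace α] {μ : Measure α}
    {W : ι → α → ℝ≥0∞} {M I : ℝ≥0∞} (hq : 1 ≤ q) (hW : ∀ i, Measurable (W i))
    (hM : ∀ x, ∑' i, W i x ≤ M) (hI : ∀ i, ∫⁻ x, W i x ∂μ ≤ I) (b : ι → ℝ≥0∞) :
    ∫⁻ x, (∑' i, W i x * b i) ^ q ∂μ ≤ M ^ (q - 1) * (I * ∑' i, b i ^ q) := by
  have hmeas (i : ι) : Measurable fun x => W i x * b i ^ q := (hW i).mul_const _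
  calc ∫⁻ x, (∑' i, W i x * b i) ^ q ∂μ
      ≤ ∫⁻ x, M ^ (q - 1) * ∑' i, W i x * b i ^ q ∂μ := by
        refine lintegral_mono fun x => (rpow_tsum_mul_le hq _ _).trans ?_
        gcongr
        exact hM x
    _ = M ^ (q - 1) * ∑' i, (∫⁻ x, W i x ∂μ) * b i ^ q := by
        rw [lintegral_const_mul _ (Measurable.tsum hmeas),
          lintegral_tsum fun i => (hmeas i).aemeasurable]
        simp only [lintegral_mul_const _ (hW _)]
    _ ≤ M ^ (q - 1) * (I * ∑' i, b i ^ q) := by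
        rw [← ENNReal.tsum_mul_left (a := I)]
        gcongr
        exact hI _

lemma tsum_add_rpow_lt_top {a b : ι → ℝ≥0∞} (hq : 1 ≤ q) (ha : ∑' i, a i ^ q < ∞)
    (hb : ∑' i, b i ^ q < ∞) : ∑' i, (a i + b i) ^ q < ∞ := by
  calc ∑' i, (a i + b i) ^ q ≤ ∑' i, 2 ^ (q - 1) * (a i ^ q + b i ^ q) :=
        ENNReal.tsum_le_tsum fun i => ENNReal.rpow_add_le_mul_rpow_add_rpow _ _ hq
    _ = 2 ^ (q - 1) * (∑' i, a i ^ q + ∑' i, b i ^ q) := by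
        rw [ENNReal.tsum_mul_left, ENNReal.tsum_add]
    _ < ∞ := ENNReal.mul_lt_top
        (ENNReal.rpow_lt_top_of_nonneg (sub_nonneg.mpr hq) ENNReal.ofNat_ne_top)
        (ENNReal.add_lt_top.mpr ⟨ha, hb⟩)

end SchurTest

section LatticeToIntegral

variable {s q : ℝ} {ω : EuclideanSpace ℝ (Fin d) → ℝ} {f : EuclideanSpace ℝ (Fin d) → ℂ}
  {T : EuclideanSpace ℝ (Fin d) ≃L[ℝ] (Fin d → ℝ)} {x₁ : EuclideanSpace ℝ (Fin d)} {c : ℝ}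
  {Γ₀ Γ : Set (EuclideanSpace ℝ (Fin d))}

lemma exists_weightedFT_le_tsum_of_mem_cone (hω : IsSAdmissible s ω) (hc0 : 0 ≤ c)
    (hc : c < 2 * Real.pi) (hs : 1 < s) (hf : Integrable f)
    (hsupp : Function.support f ⊆ dualBox T x₁ (Icc 0 c)) (h₀ : IsCone Γ₀) (hΓ : IsCone Γ)
    (hΓo : IsOpen Γ) (hsub : closure Γ₀ \ {0} ⊆ Γ) :
    ∃ C B : ℝ≥0, ∀ ξ ∈ Γ₀, weightedFT ω f ξ ≤
      C * ∑' k, stretchedExp (1 / s) 1 (ξ - latticePt T k) *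
        (Γ.indicator (weightedFT ω f) (latticePt T k) +
          B * stretchedExp (1 / s) 1 (latticePt T k)) := by
  have hp : 0 ≤ 1 / s := by positivity
  obtain ⟨R, hR, hfar⟩ := exists_norm_le_mul_norm_sub h₀ hΓ hΓo hsub
  obtain ⟨B, a, ha, hB⟩ := exists_weightedFT_le_stretchedExp hω f
  have hL : 0 ≤ 1 + (1 + a) * R ^ (1 / s) := by positivity
  obtain ⟨C, hC⟩ := exists_weightedFT_le_tsum hω hc0 hc hs hL hf hsupp
  refine ⟨C, B, fun ξ hξ => (hC ξ).trans ?_⟩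
  gcongr (C : ℝ≥0∞) * ?_
  exact ENNReal.tsum_le_tsum fun k =>
    stretchedExp_mul_le_indicator_add hp ha hR (hB _) (hfar ξ hξ _)

lemma tsum_mul_stretchedExp_latticePt_rpow_lt_top {p : ℝ} (hp : 0 < p) (hq : 1 ≤ q)
    (T : EuclideanSpace ℝ (Fin d) ≃L[ℝ] (Fin d → ℝ)) (B : ℝ≥0) :
    ∑' k, (B * stretchedExp p 1 (latticePt T k)) ^ q < ∞ := by
  have hq0 : 0 ≤ q := zero_le_one.trans hq
  obtain ⟨M, hM⟩ := exists_tsum_stretchedExp_sub_latticePt_le T hp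
  calc ∑' k, (B * stretchedExp p 1 (latticePt T k)) ^ q
      ≤ ∑' k, B ^ q * stretchedExp p 1 (0 - latticePt T k) := by
        refine ENNReal.tsum_le_tsum fun k => ?_
        rw [ENNReal.mul_rpow_of_nonneg _ _ hq0, zero_sub, stretchedExp_neg_arg]
        gcongr
        exact ENNReal.rpow_le_self_of_le_one (stretchedExp_le_one zero_le_one _) hq
    _ ≤ B ^ q * M := by
        rw [ENNReal.tsum_mul_left]
        gcongr
        exact hM 0
    _ < ∞ := ENNReal.mul_lt_top (ENNReal.rpow_lt_top_of_nonneg hq0 ENNReal.coe_ne_top)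
        ENNReal.coe_lt_top

lemma lintegral_rpow_tsum_stretchedExp_mul_lt_top {p : ℝ} (hp : 0 < p) (hq : 1 ≤ q)
    (T : EuclideanSpace ℝ (Fin d) ≃L[ℝ] (Fin d → ℝ)) {b : (Fin d → ℤ) → ℝ≥0∞}
    (hb : ∑' k, b k ^ q < ∞) :
    ∫⁻ ξ, (∑' k, stretchedExp p 1 (ξ - latticePt T k) * b k) ^ q < ∞ := by
  obtain ⟨M, hM⟩ := exists_tsum_stretchedExp_sub_latticePt_le T hp
  refine (lintegral_rpow_tsum_mul_le hq (fun k => by fun_prop) hM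
    (fun k => (lintegral_sub_right_eq_self (stretchedExp p 1) (latticePt T k)).le) b).trans_lt ?_
  exact ENNReal.mul_lt_top
    (ENNReal.rpow_lt_top_of_nonneg (sub_nonneg.mpr hq) ENNReal.coe_ne_top)
    (ENNReal.mul_lt_top (lintegral_stretchedExp_lt_top volume hp) hb)

lemma setLIntegral_weightedFT_rpow_lt_top (hω : IsSAdmissible s ω) (hc0 : 0 ≤ c)
    (hc : c < 2 * Real.pi) (hs : 1 < s) (hq : 1 ≤ q) (hf : Integrable f)
    (hsupp : Function.support f ⊆ dualBox T x₁ (Icc 0 c)) (h₀ : IsCone Γ₀) (hΓ : IsCone Γ)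
    (hΓo : IsOpen Γ) (hsub : closure Γ₀ \ {0} ⊆ Γ)
    (h : ∑' k, Γ.indicator (weightedFT ω f) (latticePt T k) ^ q < ∞) :
    ∫⁻ ξ in Γ₀, weightedFT ω f ξ ^ q < ∞ := by
  have hp : 0 < 1 / s := by positivity
  have hq0 : 0 ≤ q := zero_le_one.trans hq
  obtain ⟨C, B, hCB⟩ :=
    exists_weightedFT_le_tsum_of_mem_cone hω hc0 hc hs hf hsupp h₀ hΓ hΓo hsub
  set b : (Fin d → ℤ) → ℝ≥0∞ := fun k =>
    Γ.indicator (weightedFT ω f) (latticePt T k) + B * stretchedExp (1 / s) 1 (latticePt T k)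
  have hb : ∑' k, b k ^ q < ∞ :=
    tsum_add_rpow_lt_top hq h (tsum_mul_stretchedExp_latticePt_rpow_lt_top hp hq T B)
  have hmeas : Measurable fun ξ : EuclideanSpace ℝ (Fin d) =>
      (∑' k, stretchedExp (1 / s) 1 (ξ - latticePt T k) * b k) ^ q := by fun_prop
  calc ∫⁻ ξ in Γ₀, weightedFT ω f ξ ^ q
      ≤ ∫⁻ ξ in Γ₀, C ^ q * (∑' k, stretchedExp (1 / s) 1 (ξ - latticePt T k) * b k) ^ q := by
        refine setLIntegral_mono (hmeas.const_mul _) fun ξ hξ => ?_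
        rw [← ENNReal.mul_rpow_of_nonneg _ _ hq0]
        gcongr
        exact hCB ξ hξ
    _ ≤ C ^ q * ∫⁻ ξ, (∑' k, stretchedExp (1 / s) 1 (ξ - latticePt T k) * b k) ^ q := by
        rw [← lintegral_const_mul _ hmeas]
        exact setLIntegral_le_lintegral _ _
    _ < ∞ := ENNReal.mul_lt_top (ENNReal.rpow_lt_top_of_nonneg hq0 ENNReal.coe_ne_top)
        (lintegral_rpow_tsum_stretchedExp_mul_lt_top hp hq T hb)

lemma tsum_indicator_weightedFT_rpow_lt_top {ι : Type*} {l : ι → EuclideanSpace ℝ (Fin d)}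
    (hω : ∀ ξ, 0 ≤ ω ξ) (hq : 0 < q)
    (h : Summable fun k => Γ.indicator (fun ξ => (‖FT f ξ‖ * ω ξ) ^ q) (l k)) :
    ∑' k, Γ.indicator (weightedFT ω f) (l k) ^ q < ∞ := by
  refine lt_of_eq_of_lt (tsum_congr fun k => ?_) h.tsum_ofReal_lt_top
  by_cases hk : l k ∈ Γ
  · rw [indicator_of_mem hk, indicator_of_mem hk, ofReal_norm_FT_mul_rpow hq.le (hω _)]
  · rw [indicator_of_notMem hk, indicator_of_notMem hk, ENNReal.zero_rpow_of_pos hq,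
      ENNReal.ofReal_zero]

end LatticeToIntegral

theorem stmt13_general {d : ℕ} (s q : ℝ) (hs : 1 < s) (hq : 1 ≤ q)
    (ω : EuclideanSpace ℝ (Fin d) → ℝ) (hω : IsSAdmissible s ω)
    (A : Matrix (Fin d) (Fin d) ℝ) (hA : IsUnit A.det)
    (c : ℝ) (hc0 : 0 < c) (hc : c < 2 * Real.pi) (x₁ : EuclideanSpace ℝ (Fin d))
    (f : EuclideanSpace ℝ (Fin d) → ℂ) (hf : Integrable f)
    (hsupp : Function.support f ⊆ lattPara A x₁)
    (Γ₀ Γ : Set (EuclideanSpace ℝ (Fin d)))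
    (h₀c : IsCone Γ₀) (hΓo : IsOpen Γ) (hΓc : IsCone Γ) (hsub : closure Γ₀ \ {0} ⊆ Γ)
    (h : Summable fun k : Fin d → ℤ =>
      Γ.indicator (fun ξ => (‖FT f ξ‖ * ω ξ) ^ q) (dualLatPt A c k)) :
    (∫⁻ ξ in Γ₀, ENNReal.ofReal ((‖FT f ξ‖ * ω ξ) ^ q)) < ∞ := by
  have hq0 : 0 < q := zero_lt_one.trans_le hq
  have hω0 (ξ) : 0 ≤ ω ξ := (hω.2.1 ξ).le
  have hbox : Function.support f ⊆ dualBox (latticeCoord A hA hc0.ne') x₁ (Icc 0 c) :=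
    hsupp.trans (lattPara_subset_dualBox A hA hc0 x₁)
  simp only [← latticePt_latticeCoord A hA hc0.ne'] at h
  simp only [ofReal_norm_FT_mul_rpow hq0.le (hω0 _)]
  exact setLIntegral_weightedFT_rpow_lt_top hω hc0.le hc hs hq hf hbox h₀c hΓc hΓo hsub
    (tsum_indicator_weightedFT_rpow_lt_top hω0 hq0 h)

theorem stmt13 {d : ℕ} (s q : ℝ) (hs : 1 < s) (hq : 1 ≤ q)
    (ω : EuclideanSpace ℝ (Fin d) → ℝ) (hω : IsSAdmissible s ω)
    (A : Matrix (Fin d) (Fin d) ℝ) (hA : IsUnit A.det)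
    (c : ℝ) (hc0 : 0 < c) (hc : c < 2 * Real.pi) (x₁ : EuclideanSpace ℝ (Fin d))
    (f : EuclideanSpace ℝ (Fin d) → ℂ) (hf : Integrable f) (hfc : HasCompactSupport f)
    (hsupp : tsupport f ⊆ interior (lattPara A x₁))
    (Γ₀ Γ : Set (EuclideanSpace ℝ (Fin d)))
    (h₀o : IsOpen Γ₀) (h₀c : IsCone Γ₀) (hΓo : IsOpen Γ) (hΓc : IsCone Γ)
    (hsub : closure Γ₀ \ {0} ⊆ Γ)
    (h : Summable fun k : Fin d → ℤ =>
      Γ.indicator (fun ξ => (‖FT f ξ‖ * ω ξ) ^ q) (dualLatPt A c k)) :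
    (∫⁻ ξ in Γ₀, ENNReal.ofReal ((‖FT f ξ‖ * ω ξ) ^ q)) < ∞ :=
  stmt13_general s q hs hq ω hω A hA c hc0 hc x₁ f hf
    ((subset_tsupport f).trans (hsupp.trans interior_subset)) Γ₀ Γ h₀c hΓo hΓc hsub h

end Paper
end
end
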